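/- arXiv:math/9801105 — 3 statements merged into one kernel-verified Lean document; each statement's English description precedes it below -/
import Mathlib

section
/- Let τ ∈ ℂ with Im τ > 0, set p = exp(2iπτ), and let γ₁, γ₂ be real numbers and ξ ∈ ℂ. Then ϑ[γ₁,γ₂](ξ,τ) = exp(iπ·2γ₁γ₂) · exp(iπτγ₁²) · exp(2iπγ₁ξ) · Θ_p(−exp(2iπγ₂) · p^{γ₁+1/2} · exp(2iπξ)), where p^{γ₁+1/2} = exp(2iπτ(γ₁+1/2)). In particular the theta series with characteristics equals, up to the explicit exponential prefactor (−1)^{2γ₁γ₂} p^{γ₁²/2} z^{2γ₁} with z = exp(iπξ), the infinite product Θ_p(−e^{2iπγ₂} p^{γ₁+1/2} z²). -/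
open Complex

/-- The Jacobi theta function with characteristics `(g1, g2)`:
`ϑ[g1,g2](ξ,τ) = ∑_{m∈ℤ} exp(iπ(m+g1)²τ + 2iπ(m+g1)(ξ+g2))`. -/
noncomputable def thetaChar (g1 g2 : ℝ) (xi tau : ℂ) : ℂ :=
  ∑' m : ℤ, Complex.exp ((Real.pi : ℂ) * I * ((m : ℂ) + (g1 : ℂ)) ^ 2 * tau
      + 2 * (Real.pi : ℂ) * I * ((m : ℂ) + (g1 : ℂ)) * (xi + (g2 : ℂ)))

/-- The infinite `q`-Pochhammer product `(z;p)_∞ = ∏_{n≥0} (1 − z pⁿ)`. -/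
noncomputable def qPoch (z p : ℂ) : ℂ := ∏' n : ℕ, (1 - z * p ^ n)

/-- The Jacobi theta function `Θ_p(z) = (z;p)_∞ (p z⁻¹;p)_∞ (p;p)_∞`. -/
noncomputable def jTheta (p z : ℂ) : ℂ := qPoch z p * qPoch (p * z⁻¹) p * qPoch p p

open Filter Topology in
/-- Reciprocal of the finite `q`-Pochhammer symbol, extended by zero. -/
noncomputable def jtpR (p : ℂ) (j : ℤ) : ℂ :=
  if j < 0 then 0 else (∏ k ∈ Finset.range j.toNat, (1 - p * p ^ k))⁻¹

lemma jtp_ne {p : ℂ} (hp : ‖p‖ < 1) (k : ℕ) : 1 - p * p ^ k ≠ 0 := by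
  intro h
  have h1 : p ^ (k + 1) = 1 := by rw [pow_succ']; linear_combination -h
  have h2 : ‖p‖ ^ (k + 1) = 1 := by rw [← norm_pow, h1, norm_one]
  have h3 := pow_lt_one₀ (norm_nonneg p) hp (Nat.succ_ne_zero k)
  exact absurd h2 h3.ne

lemma jtpR_rec {p : ℂ} (hp : ‖p‖ < 1) (j : ℤ) :
    jtpR p (j - 1) = (1 - p ^ j) * jtpR p j := by
  rcases lt_trichotomy j 0 with h | h | h
  · simp [jtpR, h, show j - 1 < 0 by lia]
  · subst h; simp [jtpR]
  · obtain ⟨n, rfl⟩ : ∃ n : ℕ, j = n + 1 := ⟨(j - 1).toNat, by lia⟩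
    have h1 : ((n : ℤ) + 1).toNat = n + 1 := by lia
    have h2 : ¬ ((n : ℤ) + 1 < 0) := by lia
    have h3 : p ^ ((n : ℤ) + 1) = p * p ^ n := by
      rw [← pow_succ']; exact_mod_cast zpow_natCast p (n + 1)
    have h4 := jtp_ne hp n
    simp only [jtpR, h1, h2, add_sub_cancel_right, Int.toNat_natCast, if_false, h3,
      Finset.prod_range_succ, mul_inv, show ¬ ((n : ℤ) < 0) by lia]
    field_simp

/-- The finite Jacobi triple product. -/
lemma jtp_finite {p Z : ℂ} (hp0 : p ≠ 0) (hp : ‖p‖ < 1) (hZ : Z ≠ 0) (T : ℤ → ℂ)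
    (hT0 : T 0 = 1) (hT : ∀ m, T (m + 1) = -Z * p ^ m * T m) (N : ℕ) :
    HasSum (fun m : ℤ => (∏ k ∈ Finset.range (2 * N), (1 - p * p ^ k))
        * jtpR p (N + m) * jtpR p (N - m) * T m)
      (∏ k ∈ Finset.range N, ((1 - Z * p ^ k) * (1 - p * Z⁻¹ * p ^ k))) := by
  induction N with
  | zero =>
    convert hasSum_single (0 : ℤ) _ using 1
    · simp [jtpR, hT0]
    · intro m hm
      rcases lt_or_gt_of_ne hm with h | h <;> simp [jtpR, h]
  | succ N ih =>
    have h1 := ((Equiv.subRight (1 : ℤ)).hasSum_iff).2 ih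
    have h2 := ((Equiv.addRight (1 : ℤ)).hasSum_iff).2 ih
    have h3 := ((ih.mul_left (1 + p ^ (2 * N + 1))).add (h1.mul_left (-(Z * p ^ N)))).add
      (h2.mul_left (-(p * Z⁻¹ * p ^ N)))
    convert h3 using 1
    · rfl
    · funext m
      simp only [Function.comp, Equiv.subRight_apply, Equiv.coe_addRight]
      have e1 : T m = -Z * p ^ (m - 1) * T (m - 1) := by
        have := hT (m - 1); rwa [sub_add_cancel] at this
      have hx0 : p ^ (m - 1) ≠ 0 := zpow_ne_zero _ hp0
      set x := p ^ ((N : ℤ) + m + 1) with hx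
      set y := p ^ ((N : ℤ) - m + 1) with hy
      have exy : x * y = p ^ (2 * N + 2) := by
        rw [hx, hy, ← zpow_add₀ hp0, ← zpow_natCast]; congr 1; push_cast; ring
      have e2 : -(Z * p ^ N) * T (m - 1) = y * T m := by
        have : y * p ^ (m - 1) = p ^ N := by
          rw [hy, ← zpow_add₀ hp0, ← zpow_natCast]; congr 1; ring
        rw [e1, ← this]; ring
      have e3 : -(p * Z⁻¹ * p ^ N) * T (m + 1) = x * T m := by
        have : x = p * p ^ N * p ^ m := by
          rw [hx, ← zpow_natCast, ← zpow_one_add₀ hp0, ← zpow_add₀ hp0]; congr 1; ring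
        rw [hT, this]; field_simp
      have r1 := jtpR_rec hp ((N : ℤ) + m + 1)
      have r2 := jtpR_rec hp ((N : ℤ) - m + 1)
      have r3 := jtpR_rec hp ((N : ℤ) + m)
      have r4 := jtpR_rec hp ((N : ℤ) - m)
      rw [add_sub_cancel_right, ← hx] at r1
      rw [add_sub_cancel_right, ← hy] at r2
      have ex : p ^ ((N : ℤ) + m) = x / p := by rw [hx, zpow_add_one₀ hp0]; field_simp
      have ey : p ^ ((N : ℤ) - m) = y / p := by rw [hy, zpow_add_one₀ hp0]; field_simp
      rw [ex, r1] at r3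
      rw [ey, r2] at r4
      have i1 : ((N + 1 : ℕ) : ℤ) + m = N + m + 1 := by push_cast; ring
      have i2 : ((N + 1 : ℕ) : ℤ) - m = N - m + 1 := by push_cast; ring
      have i3 : (N : ℤ) + (m - 1) = N + m - 1 := by ring
      have i4 : (N : ℤ) - (m - 1) = N - m + 1 := by ring
      have i5 : (N : ℤ) + (m + 1) = N + m + 1 := by ring
      have i6 : (N : ℤ) - (m + 1) = N - m - 1 := by ring
      rw [i1, i2, i3, i4, i5, i6, r3, r4, r1, r2, show 2 * (N + 1) = 2 * N + 1 + 1 by ring,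
        Finset.prod_range_succ, Finset.prod_range_succ]
      generalize jtpR p ((N : ℤ) + m + 1) = A
      generalize jtpR p ((N : ℤ) - m + 1) = B
      generalize (∏ k ∈ Finset.range (2 * N), (1 - p * p ^ k)) = S
      have f1 : p * p ^ (2 * N) = x * y / p := by rw [exy]; field_simp; ring
      have f2 : p * p ^ (2 * N + 1) = x * y := by rw [exy]; ring
      have f3 : p ^ (2 * N + 1) = x * y / p := by rw [exy]; field_simp; ring
      rw [f1, f2, f3]
      have key : (1 - x * y / p) * (1 - x * y) = (1 + x * y / p) * ((1 - x) * (1 - y))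
          + y * ((1 - x) * (1 - x / p)) + x * ((1 - y) * (1 - y / p)) := by ring
      linear_combination (S * A * B * T m) * key - (S * A * B * (1 - x) * (1 - x / p)) * e2
        - (S * A * B * (1 - y) * (1 - y / p)) * e3
    · rw [Finset.prod_range_succ]
      generalize (∏ k ∈ Finset.range N, ((1 - Z * p ^ k) * (1 - p * Z⁻¹ * p ^ k))) = S
      field_simp
      ring

lemma jtp_mult {p : ℂ} (hp : ‖p‖ < 1) (z : ℂ) :
    Summable (fun n : ℕ => ‖-(z * p ^ n)‖) := by
  simpa using (summable_geometric_of_lt_one (norm_nonneg p) hp).mul_left ‖z‖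

open Filter Topology in
lemma jtp_tendsto {p : ℂ} (hp : ‖p‖ < 1) (z : ℂ) :
    Tendsto (fun n : ℕ => ∏ k ∈ Finset.range n, (1 - z * p ^ k)) atTop (𝓝 (qPoch z p)) := by
  have h := (multipliable_one_add_of_summable (jtp_mult hp z)).hasProd.tendsto_prod_nat
  simpa only [qPoch, sub_eq_add_neg] using h

lemma jtp_qPoch_ne {p : ℂ} (hp : ‖p‖ < 1) : qPoch p p ≠ 0 := by
  have h := tprod_one_add_ne_zero_of_summable (f := fun n : ℕ => -(p * p ^ n))
    (fun i => by simpa only [sub_eq_add_neg] using jtp_ne hp i) (jtp_mult hp p)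
  simpa only [qPoch, sub_eq_add_neg] using h

open Filter Topology in
/-- The Jacobi triple product. -/
lemma jtp_main {p Z : ℂ} (hp0 : p ≠ 0) (hp : ‖p‖ < 1) (hZ : Z ≠ 0) (T : ℤ → ℂ)
    (hT0 : T 0 = 1) (hT : ∀ m, T (m + 1) = -Z * p ^ m * T m) (hs : Summable T) :
    ∑' m, T m = jTheta p Z := by
  have hS := jtp_tendsto hp p
  have hne := jtp_qPoch_ne hp
  have hSi := hS.inv₀ hne
  obtain ⟨C, hC⟩ := (Metric.isBounded_range_of_tendsto _ hS).exists_norm_le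
  obtain ⟨D, hD⟩ := (Metric.isBounded_range_of_tendsto _ hSi).exists_norm_le
  have hC' : ∀ n : ℕ, ‖∏ k ∈ Finset.range n, (1 - p * p ^ k)‖ ≤ C := fun n => hC _ ⟨n, rfl⟩
  have hC0 : 0 ≤ C := (norm_nonneg _).trans (hC' 0)
  have hD0 : 0 ≤ D := (norm_nonneg _).trans (hD _ ⟨0, rfl⟩)
  have hR : ∀ j : ℤ, ‖jtpR p j‖ ≤ D := by
    intro j
    unfold jtpR
    split_ifs
    · simpa using hD0
    · exact hD _ ⟨j.toNat, rfl⟩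
  have hRl : ∀ u : ℕ → ℤ, Tendsto u atTop atTop →
      Tendsto (fun N => jtpR p (u N)) atTop (𝓝 (qPoch p p)⁻¹) := by
    intro u hu
    have h1 : Tendsto (fun N => (u N).toNat) atTop atTop := by
      refine tendsto_atTop.2 fun b => ?_
      filter_upwards [hu.eventually_ge_atTop (b : ℤ)] with N hN
      lia
    refine (hSi.comp h1).congr' ?_
    filter_upwards [hu.eventually_ge_atTop 0] with N hN
    simp [jtpR, not_lt.2 hN]
  have hlim := tendsto_tsum_of_dominated_convergence (𝓕 := atTop)
    (f := fun (N : ℕ) (m : ℤ) => (∏ k ∈ Finset.range (2 * N), (1 - p * p ^ k))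
        * jtpR p (N + m) * jtpR p (N - m) * T m)
    (g := fun m => qPoch p p * (qPoch p p)⁻¹ * (qPoch p p)⁻¹ * T m)
    (bound := fun m => C * D * D * ‖T m‖) (hs.norm.mul_left _)
    (by
      intro m
      have a1 : Tendsto (fun N : ℕ => 2 * N) atTop atTop :=
        tendsto_atTop_mono (fun n => by simp only [id]; lia) tendsto_id
      have a2 : Tendsto (fun N : ℕ => (N : ℤ) + m) atTop atTop :=
        tendsto_atTop_add_const_right _ _ tendsto_natCast_atTop_atTop
      have a3 : Tendsto (fun N : ℕ => (N : ℤ) - m) atTop atTop :=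
        tendsto_atTop_add_const_right _ _ tendsto_natCast_atTop_atTop
      exact (((hS.comp a1).mul (hRl _ a2)).mul (hRl _ a3)).mul_const _)
    (Eventually.of_forall fun N m => by
      simp only [norm_mul]
      gcongr
      · exact hC' _
      · exact hR _
      · exact hR _)
  have hprod := (jtp_tendsto hp Z).mul (jtp_tendsto hp (p * Z⁻¹))
  have heq : ∀ N : ℕ, _ := fun N => (jtp_finite hp0 hp hZ T hT0 hT N).tsum_eq
  simp only [heq, Finset.prod_mul_distrib] at hlim
  have := tendsto_nhds_unique hlim hprod
  rw [tsum_mul_left, mul_inv_cancel₀ hne, one_mul] at this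
  rw [jTheta, ← this]
  field_simp

/-- Expression of the theta function with rational characteristics in terms of the usual
Jacobi theta function `Θ_p`, with `p = exp(2iπτ)` and `z = exp(iπξ)`:
`ϑ[γ₁,γ₂](ξ,τ) = (−1)^{2γ₁γ₂} p^{γ₁²/2} z^{2γ₁} Θ_p(−e^{2iπγ₂} p^{γ₁+1/2} z²)`,
all fractional powers being written via the exponential function. -/
theorem stmt2 (tau : ℂ) (htau : 0 < tau.im) (g1 g2 : ℝ) (xi : ℂ) :
    thetaChar g1 g2 xi tau =
      Complex.exp ((Real.pi : ℂ) * I * (2 * (g1 : ℂ) * (g2 : ℂ)))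
        * Complex.exp ((Real.pi : ℂ) * I * tau * (g1 : ℂ) ^ 2)
        * Complex.exp (2 * (Real.pi : ℂ) * I * (g1 : ℂ) * xi)
        * jTheta (Complex.exp (2 * (Real.pi : ℂ) * I * tau))
            (-(Complex.exp (2 * (Real.pi : ℂ) * I * (g2 : ℂ))
              * Complex.exp (2 * (Real.pi : ℂ) * I * tau * ((g1 : ℂ) + 1 / 2))
              * Complex.exp (2 * (Real.pi : ℂ) * I * xi))) := by
  set p := Complex.exp (2 * (Real.pi : ℂ) * I * tau) with hpdef
  set Z := (-(Complex.exp (2 * (Real.pi : ℂ) * I * (g2 : ℂ))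
              * Complex.exp (2 * (Real.pi : ℂ) * I * tau * ((g1 : ℂ) + 1 / 2))
              * Complex.exp (2 * (Real.pi : ℂ) * I * xi))) with hZdef
  have hp : ‖p‖ < 1 := UpperHalfPlane.norm_exp_two_pi_I_lt_one ⟨tau, htau⟩
  have hZ : Z ≠ 0 := by simp [hZdef, Complex.exp_ne_zero]
  have hmain := jtp_main (p := p) (Z := Z) (Complex.exp_ne_zero _) hp hZ
    (fun m => jacobiTheta₂_term m (g1 * tau + xi + g2) tau) (by simp [jacobiTheta₂_term])
    (by
      intro m
      simp only [jacobiTheta₂_term, hZdef, hpdef, neg_neg, ← Complex.exp_int_mul,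
        ← Complex.exp_add]
      congr 1
      push_cast
      ring)
    ((summable_jacobiTheta₂_term_iff _ _).2 htau)
  rw [← hmain, thetaChar, ← tsum_mul_left]
  congr 1
  funext m
  simp only [jacobiTheta₂_term, ← Complex.exp_add]
  congr 1
  ring
end

section
/- Let N ≥ 1 be an integer, τ ∈ ℂ with Im τ > 0, ω = exp(2iπ/N), and let ξ, ζ ∈ ℂ. For integers a, b define W_{(α₁,α₂)}(ξ,ζ,τ) = ϑ[1/2+α₁/N, 1/2+α₂/N](ξ + ζ/N, τ) / ( N · ϑ[1/2+α₁/N, 1/2+α₂/N](ζ/N, τ) ). Then for all a, b ∈ {0,…,N−1} (whenever no denominator vanishes): ∑_{s=0}^{N−1} W_{(−a,s)}(ξ,ζ,τ) · ω^{−bs} = ( ϑ[(b−a)/N + 1/2, 1/2](ξ+ζ, Nτ) / ϑ[−a/N + 1/2, 1/2](ζ, Nτ) ) · ( ∏_{k=0, k≠b}^{N−1} ϑ[k/N + 1/2, 1/2](ξ, Nτ) ) / ( ∏_{k=1}^{N−1} ϑ[k/N + 1/2, 1/2](0, Nτ) ). -/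
open Complex

/-- The Boltzmann-weight functions
`W_{(α₁,α₂)}(ξ,ζ,τ) = ϑ[1/2+α₁/N,1/2+α₂/N](ξ+ζ/N,τ) / (N ϑ[1/2+α₁/N,1/2+α₂/N](ζ/N,τ))`. -/
noncomputable def Wfun (N : ℕ) (a1 a2 : ℤ) (xi zeta tau : ℂ) : ℂ :=
  thetaChar (1 / 2 + (a1 : ℝ) / N) (1 / 2 + (a2 : ℝ) / N) (xi + zeta / N) tau
    / ((N : ℂ) * thetaChar (1 / 2 + (a1 : ℝ) / N) (1 / 2 + (a2 : ℝ) / N) (zeta / N) tau)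


lemma thetaChar_eq_jac (g1 g2 : ℝ) (xi tau : ℂ) :
    thetaChar g1 g2 xi tau = Complex.exp (Real.pi * I * g1 ^ 2 * tau + 2 * Real.pi * I * g1 * (xi + g2))
      * jacobiTheta₂ (xi + g2 + g1 * tau) tau := by
  unfold thetaChar jacobiTheta₂
  rw [← tsum_mul_left]
  refine tsum_congr fun m => ?_
  rw [jacobiTheta₂_term, ← Complex.exp_add]
  congr 1
  ring

lemma thetaChar_diff (g1 g2 : ℝ) {tau : ℂ} (ht : 0 < tau.im) :
    Differentiable ℂ (fun z => thetaChar g1 g2 z tau) := by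
  simp only [thetaChar_eq_jac]
  refine Differentiable.mul (by fun_prop) ?_
  intro z
  exact (differentiableAt_jacobiTheta₂_fst (z + g2 + g1 * tau) ht).comp z (f := fun z => z + (g2 : ℂ) + g1 * tau) (by fun_prop)

lemma thetaChar_shift (x g1 g2 : ℝ) (xi tau : ℂ) :
    thetaChar g1 g2 (xi + x * tau) tau =
      Complex.exp (-(Real.pi * I * x ^ 2 * tau) - 2 * Real.pi * I * x * (xi + g2))
        * thetaChar (g1 + x) g2 xi tau := by
  unfold thetaChar
  rw [← tsum_mul_left]
  refine tsum_congr fun m => ?_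
  rw [← Complex.exp_add]
  congr 1
  push_cast
  ring

lemma thetaChar_g2 (x g1 g2 : ℝ) (xi tau : ℂ) :
    thetaChar g1 (g2 + x) xi tau = thetaChar g1 g2 (xi + x) tau := by
  unfold thetaChar
  refine tsum_congr fun m => ?_
  congr 1
  push_cast
  ring

lemma thetaChar_int (n : ℤ) (g1 g2 : ℝ) (xi tau : ℂ) :
    thetaChar (g1 + n) g2 xi tau = thetaChar g1 g2 xi tau := by
  unfold thetaChar
  rw [← (Equiv.addRight n).tsum_eq (fun m : ℤ => Complex.exp ((Real.pi : ℂ) * I * ((m : ℂ) + (g1 : ℂ)) ^ 2 * tau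
      + 2 * (Real.pi : ℂ) * I * ((m : ℂ) + (g1 : ℂ)) * (xi + (g2 : ℂ))))]
  refine tsum_congr fun m => ?_
  simp only [Equiv.coe_addRight]
  congr 1
  push_cast
  ring

lemma thetaChar_one (g1 g2 : ℝ) (xi tau : ℂ) :
    thetaChar g1 g2 (xi + 1) tau = Complex.exp (2 * Real.pi * I * g1) * thetaChar g1 g2 xi tau := by
  unfold thetaChar
  rw [← tsum_mul_left]
  refine tsum_congr fun m => ?_
  rw [← Complex.exp_add, Complex.exp_eq_exp_iff_exists_int]
  exact ⟨m, by ring⟩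

lemma exp_half : Complex.exp (2 * Real.pi * I * ((1 / 2 : ℝ) : ℂ)) = -1 := by
  rw [← Complex.exp_pi_mul_I]
  congr 1
  push_cast
  ring

lemma theta_one (xi tau : ℂ) :
    thetaChar (1/2) (1/2) (xi + 1) tau = - thetaChar (1/2) (1/2) xi tau := by
  rw [thetaChar_one, exp_half]; ring

lemma theta_tau (g1 g2 : ℝ) (xi tau : ℂ) :
    thetaChar g1 g2 (xi + tau) tau =
      Complex.exp (-(Real.pi * I * tau) - 2 * Real.pi * I * (xi + g2)) * thetaChar g1 g2 xi tau := by
  have h := thetaChar_shift 1 g1 g2 xi tau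
  have h2 := thetaChar_int 1 g1 g2 xi tau
  push_cast at h h2
  rw [h2] at h
  simpa using h

lemma theta_zero (tau : ℂ) : thetaChar (1/2) (1/2) 0 tau = 0 := by
  let F : ℤ → ℂ := fun m => Complex.exp ((Real.pi : ℂ) * I * ((m : ℂ) + ((1 / 2 : ℝ) : ℂ)) ^ 2 * tau
      + 2 * (Real.pi : ℂ) * I * ((m : ℂ) + ((1 / 2 : ℝ) : ℂ)) * (0 + ((1 / 2 : ℝ) : ℂ)))
  have hF : thetaChar (1/2) (1/2) 0 tau = ∑' m, F m := rfl
  have key : ∀ m, F ((Equiv.subLeft (-1 : ℤ)) m) = - F m := by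
    intro m
    have : - F m = Complex.exp (Real.pi * I) * F m := by rw [Complex.exp_pi_mul_I]; ring
    rw [this]
    simp only [F]
    rw [← Complex.exp_add, Complex.exp_eq_exp_iff_exists_int]
    refine ⟨-m-1, ?_⟩
    simp only [Equiv.subLeft_apply]
    push_cast
    ring
  have h : ∑' m, F m = - ∑' m, F m := by
    rw [← tsum_neg, ← (Equiv.subLeft (-1 : ℤ)).tsum_eq F]
    exact tsum_congr key
  rw [hF]
  exact self_eq_neg.mp h

lemma four_sum (g : ℝ → ℂ) (hg : Continuous g) (hp : ∀ t, g (t + 1) = g t)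
    (hs : Summable fun n : ℤ => ∫ t in (0:ℝ)..1, Complex.exp (-(2 * Real.pi * I * n * t)) * g t) :
    HasSum (fun n : ℤ => ∫ t in (0:ℝ)..1, Complex.exp (-(2 * Real.pi * I * n * t)) * g t) (g 0) := by
  have : Fact ((0:ℝ) < 1) := ⟨one_pos⟩
  let G : C(AddCircle (1:ℝ), ℂ) := ⟨AddCircle.liftIco 1 0 g,
    AddCircle.liftIco_continuous (by simpa using (hp 0).symm) hg.continuousOn⟩
  have hc : ∀ n : ℤ, fourierCoeff G n = ∫ t in (0:ℝ)..1, Complex.exp (-(2 * Real.pi * I * n * t)) * g t := by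
    intro n
    change fourierCoeff (AddCircle.liftIco 1 0 g) n = _
    rw [fourierCoeff_liftIco_eq, fourierCoeffOn_eq_integral]
    simp only [fourier_coe_apply]
    simp
  have := has_pointwise_sum_fourier_series_of_summable (f := G) (by simpa only [← hc] using hs) 0
  simp only [hc] at this
  have h0 : G 0 = g 0 := by
    change AddCircle.liftIco 1 0 g ((0:ℝ) : AddCircle (1:ℝ)) = g 0
    exact AddCircle.liftIco_coe_apply (by simp)
  rw [h0] at this
  simpa using this

lemma int_const (h : ℂ → ℂ) (hd : Differentiable ℂ h) (hp : ∀ z, h (z + 1) = h z) (w : ℂ) :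
    ∫ t in (0:ℝ)..1, h (w + t) = ∫ t in (0:ℝ)..1, h t := by
  obtain ⟨F, hF⟩ : ∃ F : ℂ → ℂ, ∀ z ∈ Metric.ball (0:ℂ) (‖w‖ + 3), HasDerivAt F (h z) z := 
    (hd.differentiableOn).isExactOn_ball
  have key : ∀ u ∈ Metric.ball (0:ℂ) (‖w‖+1), ∫ t in (0:ℝ)..1, h (u + t) = F (u + 1) - F u := by
    intro u hu
    rw [mem_ball_zero_iff] at hu
    have := intervalIntegral.integral_eq_sub_of_hasDerivAt (a := 0) (b := 1)
      (f := fun t : ℝ => F (u + t)) (f' := fun t : ℝ => h (u + t)) ?_ ?_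
    · simpa using this
    · intro t ht
      rw [Set.uIcc_of_le zero_le_one] at ht
      have hb : u + t ∈ Metric.ball (0:ℂ) (‖w‖ + 3) := by
        rw [mem_ball_zero_iff]
        have h1 := norm_add_le u (t:ℂ)
        have h2 : ‖(t:ℂ)‖ ≤ 1 := by
          rw [Complex.norm_real, Real.norm_eq_abs, abs_le]; constructor <;> linarith [ht.1, ht.2]
        linarith
      have h3 : HasDerivAt (fun z : ℂ => F (u + z)) (h (u + t)) (t : ℂ) := (hF _ hb).comp_const_add u t
      exact h3.comp_ofReal
    · apply Continuous.intervalIntegrable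
      have := hd.continuous
      fun_prop
  have hcon : ∀ u ∈ Metric.ball (0:ℂ) (‖w‖+1), HasDerivAt (fun u => F (u + 1) - F u) 0 u := by
    intro u hu
    rw [mem_ball_zero_iff] at hu
    have h1 := hF u (by rw [mem_ball_zero_iff]; linarith)
    have h2 := hF (u + 1) (by
      rw [mem_ball_zero_iff]
      have h1 := norm_add_le u (1:ℂ)
      rw [norm_one] at h1
      linarith)
    have h3 := (h2.comp_add_const u 1).sub h1
    rwa [hp, sub_self] at h3
  have hw : w ∈ Metric.ball (0:ℂ) (‖w‖+1) := by simp
  have h0 : (0:ℂ) ∈ Metric.ball (0:ℂ) (‖w‖+1) := by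
    simp; positivity
  have e1 := key w hw
  have e0 := key 0 h0
  have e : F (w + 1) - F w = F (0 + 1) - F 0 := by
    apply (convex_ball (0:ℂ) (‖w‖+1)).is_const_of_fderivWithin_eq_zero (𝕜 := ℂ) (f := fun u => F (u + 1) - F u) ?_ ?_ hw h0
    · intro u hu
      exact (hcon u hu).differentiableAt.differentiableWithinAt
    · intro u hu
      rw [fderivWithin_of_isOpen Metric.isOpen_ball hu]
      ext
      simp [(hcon u hu).deriv]
  rw [e1, e, ← e0]
  simp

lemma theta_summable {tau : ℂ} (ht : 0 < tau.im) (z : ℂ) :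
    Summable fun m : ℤ => Complex.exp (Real.pi * I * ((m : ℂ) + 1/2) ^ 2 * tau
      + 2 * Real.pi * I * m * z + Real.pi * I * (m + 1 / 2)) := by
  have h := ((summable_jacobiTheta₂_term_iff (z + 1/2 + 1/2 * tau) tau).2 ht).mul_left
    (Complex.exp (Real.pi * I * tau / 4 + Real.pi * I / 2))
  refine h.congr fun m => ?_
  rw [jacobiTheta₂_term, ← Complex.exp_add]
  congr 1
  ring

lemma uniq {tau : ℂ} (ht : 0 < tau.im) (f : ℂ → ℂ) (hf : Differentiable ℂ f)
    (h1 : ∀ z, f (z + 1) = - f z)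
    (h2 : ∀ z, f (z + tau) = - Complex.exp (-(Real.pi * I * tau) - 2 * Real.pi * I * z) * f z) :
    ∃ C : ℂ, ∀ z, f z = C * thetaChar (1/2) (1/2) z tau := by
  let h : ℤ → ℂ → ℂ := fun n z => Complex.exp (-(2 * Real.pi * I * (n + 1/2) * z)) * f z
  have hd : ∀ n, Differentiable ℂ (h n) := fun n => by
    simp only [h]
    fun_prop
  have hper : ∀ n z, h n (z + 1) = h n z := by
    intro n z
    simp only [h, h1]
    have : Complex.exp (-(2 * Real.pi * I * (n + 1/2) * (z + 1))) =
        - Complex.exp (-(2 * Real.pi * I * (n + 1/2) * z)) := by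
      rw [neg_eq_neg_one_mul (Complex.exp _), ← Complex.exp_pi_mul_I, ← Complex.exp_add,
        Complex.exp_eq_exp_iff_exists_int]
      exact ⟨-n-1, by push_cast; ring⟩
    rw [this]
    ring
  let c : ℤ → ℂ := fun n => ∫ t in (0:ℝ)..1, h n t
  have hc : ∀ n w, ∫ t in (0:ℝ)..1, h n (w + t) = c n := fun n w => int_const _ (hd n) (hper n) w
  let θ : ℤ → ℂ := fun m => Complex.exp (Real.pi * I * ((m : ℂ) + 1/2) ^ 2 * tau
      + Real.pi * I * (m + 1 / 2))
  have hrec : ∀ n, c (n + 1) = - Complex.exp (2 * Real.pi * I * (n + 1) * tau) * c n := by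
    intro n
    rw [← hc n tau, ← intervalIntegral.integral_const_mul]
    refine intervalIntegral.integral_congr fun t _ => ?_
    simp only [h]
    rw [add_comm tau, h2]
    have : Complex.exp (-(2 * Real.pi * I * (((n + 1 : ℤ) : ℂ) + 1/2) * t)) =
      Complex.exp (2 * Real.pi * I * (n + 1) * tau) * (Complex.exp (-(2 * Real.pi * I * (n + 1/2) * (t + tau)))
       * Complex.exp (-(Real.pi * I * tau) - 2 * Real.pi * I * t)) := by
      rw [← Complex.exp_add, ← Complex.exp_add]
      congr 1
      push_cast
      ring
    rw [this]
    ring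
  have hθrec : ∀ n, θ (n + 1) = - Complex.exp (2 * Real.pi * I * (n + 1) * tau) * θ n := by
    intro n
    simp only [θ]
    rw [neg_eq_neg_one_mul (Complex.exp _), ← Complex.exp_pi_mul_I, ← Complex.exp_add, ← Complex.exp_add]
    congr 1
    push_cast
    ring
  obtain ⟨C, hC⟩ : ∃ C, ∀ n, c n = C * θ n := by
    refine ⟨c 0 / θ 0, fun n => ?_⟩
    have hθ0 : θ 0 ≠ 0 := Complex.exp_ne_zero _
    induction n using Int.induction_on with
    | zero => field_simp
    | succ n ih => rw [hrec, hθrec, ih]; ring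
    | pred n ih =>
      have e1 := hrec (-(n:ℤ) - 1)
      have e2 := hθrec (-(n:ℤ) - 1)
      rw [sub_add_cancel] at e1 e2
      rw [e1, e2] at ih
      have hne : - Complex.exp (2 * Real.pi * I * (((-(n:ℤ) - 1 : ℤ) : ℂ) + 1) * tau) ≠ 0 :=
        neg_ne_zero.2 (Complex.exp_ne_zero _)
      apply mul_left_cancel₀ hne
      rw [ih]; ring
  refine ⟨C, fun z => ?_⟩
  have hco : ∀ n : ℤ, (∫ t in (0:ℝ)..1, Complex.exp (-(2 * Real.pi * I * n * t)) * h 0 (z + t)) =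
      C * Complex.exp (Real.pi * I * ((n : ℂ) + 1/2) ^ 2 * tau
      + 2 * Real.pi * I * n * z + Real.pi * I * (n + 1 / 2)) := by
    intro n
    have e : C * Complex.exp (Real.pi * I * ((n : ℂ) + 1/2) ^ 2 * tau
      + 2 * Real.pi * I * n * z + Real.pi * I * (n + 1 / 2)) = Complex.exp (2 * Real.pi * I * n * z) * c n := by
      rw [hC, mul_left_comm, ← Complex.exp_add]
      congr 2
      ring
    rw [e, ← hc n z, ← intervalIntegral.integral_const_mul]
    refine intervalIntegral.integral_congr fun t _ => ?_
    simp only [h]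
    rw [← mul_assoc, ← mul_assoc, ← Complex.exp_add, ← Complex.exp_add]
    congr 2
    push_cast
    ring
  have hsum := four_sum (fun t : ℝ => h 0 (z + t)) (by have := (hd 0).continuous; fun_prop)
    (fun t => by push_cast; rw [← add_assoc, hper]) (by
      simp only [hco]
      exact (theta_summable ht z).mul_left C)
  simp only [hco] at hsum
  have hz := hsum.tsum_eq
  simp only [Complex.ofReal_zero, add_zero] at hz
  have hfz : f z = Complex.exp (Real.pi * I * z) * h 0 z := by
    simp only [h]
    rw [← mul_assoc, ← Complex.exp_add]
    have : (Real.pi * I * z + -(2 * Real.pi * I * (((0:ℤ):ℂ) + 1/2) * z) : ℂ) = 0 := by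
      push_cast; ring
    rw [this]; simp
  rw [hfz, ← hz, tsum_mul_left, mul_left_comm]
  congr 1
  unfold thetaChar
  rw [← tsum_mul_left]
  refine tsum_congr fun m => ?_
  rw [← Complex.exp_add]
  congr 1
  push_cast
  ring

lemma sum_range_c (N : ℕ) : ∑ k ∈ Finset.range N, (k : ℂ) = N * (N - 1) / 2 := by
  induction N with
  | zero => simp
  | succ n ih => rw [Finset.sum_range_succ, ih]; push_cast; ring

lemma prod_shift {R : Type*} [CommRing R] (p : ℕ → R) (e : R) (N : ℕ) (hN : 1 ≤ N) (h : p N = e * p 0) :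
    ∏ k ∈ Finset.range N, p (k + 1) = e * ∏ k ∈ Finset.range N, p k := by
  obtain ⟨M, rfl⟩ : ∃ M, N = M + 1 := ⟨N - 1, by omega⟩
  rw [Finset.prod_range_succ, Finset.prod_range_succ', h]
  ring

lemma sum_shift (u v : ℕ → ℂ) (N : ℕ) (hN : 1 ≤ N) (hu : u N = - u 0) (hv : v N = - v 0) :
    ∑ s ∈ Finset.range N, u (s + 1) * ∏ t ∈ (Finset.range N).erase s, v (t + 1) =
      - ∑ s ∈ Finset.range N, u s * ∏ t ∈ (Finset.range N).erase s, v t := by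
  have key : ∀ u v : ℕ → ℂ, ∑ s ∈ Finset.range N, u s * ∏ t ∈ (Finset.range N).erase s, v t =
      Polynomial.eval 0 (Polynomial.derivative (∏ t ∈ Finset.range N,
        (Polynomial.C (v t) + Polynomial.X * Polynomial.C (u t)))) := by
    intro u v
    rw [Polynomial.derivative_prod_finset, Polynomial.eval_finsetSum]
    refine Finset.sum_congr rfl fun s _ => ?_
    rw [mul_comm]
    simp [Polynomial.eval_prod]
  rw [key u v, key (fun s => u (s+1)) (fun s => v (s+1)),
    prod_shift (fun t => Polynomial.C (v t) + Polynomial.X * Polynomial.C (u t)) (-1) N hN]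
  · simp
  · simp only [hu, hv, map_neg]; ring

lemma pk_period (N : ℕ) (hN : 1 ≤ N) (k : ℕ) (xi T : ℂ) :
    thetaChar (((k + N : ℕ) : ℝ) / N + 1 / 2) (1 / 2) xi T =
      thetaChar ((k : ℝ) / N + 1 / 2) (1 / 2) xi T := by
  rw [← thetaChar_int 1 ((k : ℝ) / N + 1 / 2)]
  have : (N : ℝ) ≠ 0 := by positivity
  congr 1
  push_cast
  field_simp
  ring

lemma pk_shift (N : ℕ) (hN : 1 ≤ N) (k b : ℕ) (xi tau : ℂ) :
    thetaChar ((k : ℝ) / N + 1 / 2) (1 / 2) (xi + b * tau) (N * tau) =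
      Complex.exp (-(Real.pi * I * b ^ 2 * tau / N) - 2 * Real.pi * I * (b / N) * (xi + 1 / 2)) *
      thetaChar (((k + b : ℕ) : ℝ) / N + 1 / 2) (1 / 2) xi (N * tau) := by
  have hN' : (N : ℂ) ≠ 0 := by exact_mod_cast (by omega : N ≠ 0)
  have h := thetaChar_shift ((b : ℝ) / N) ((k : ℝ) / N + 1 / 2) (1 / 2) xi (N * tau)
  have e1 : xi + (((b : ℝ) / N : ℝ) : ℂ) * (N * tau) = xi + b * tau := by
    push_cast; field_simp
  rw [e1] at h
  rw [h]
  congr 1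
  · congr 1
    push_cast
    field_simp
  · congr 1
    push_cast
    ring

lemma prodP (N : ℕ) (hN : 1 ≤ N) {tau : ℂ} (ht : 0 < tau.im) :
    ∃ E : ℂ, ∀ z, ∏ k ∈ Finset.range N, thetaChar ((k : ℝ) / N + 1 / 2) (1 / 2) z (N * tau) =
      E * thetaChar (1/2) (1/2) z tau := by
  have hN' : (N : ℂ) ≠ 0 := by exact_mod_cast (by omega : N ≠ 0)
  have htN : 0 < ((N : ℂ) * tau).im := by
    have h0 : (0:ℝ) < N := by exact_mod_cast hN
    simpa using mul_pos h0 ht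
  refine uniq ht _ ?_ ?_ ?_
  · have := fun k : ℕ => thetaChar_diff ((k : ℝ) / N + 1 / 2) (1 / 2) htN
    fun_prop
  · intro z
    simp only [thetaChar_one]
    rw [Finset.prod_mul_distrib, ← Complex.exp_sum, neg_eq_neg_one_mul (Finset.prod _ _)]
    congr 1
    rw [← Complex.exp_pi_mul_I, Complex.exp_eq_exp_iff_exists_int]
    refine ⟨N - 1, ?_⟩
    rw [← Finset.mul_sum]
    push_cast
    rw [Finset.sum_add_distrib, ← Finset.sum_div, sum_range_c]
    simp
    field_simp
    ring
  · intro z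
    have h : ∀ k : ℕ, thetaChar ((k : ℝ) / N + 1 / 2) (1 / 2) (z + tau) (N * tau) =
      Complex.exp (-(Real.pi * I * tau / N) - 2 * Real.pi * I * (1 / N) * (z + 1 / 2)) *
      thetaChar (((k + 1 : ℕ) : ℝ) / N + 1 / 2) (1 / 2) z (N * tau) := by
      intro k
      have := pk_shift N hN k 1 z tau
      simpa using this
    simp only [h]
    rw [Finset.prod_mul_distrib, prod_shift (fun k : ℕ => thetaChar ((k : ℝ) / N + 1 / 2) (1 / 2) z (N * tau)) 1 N hN,
      one_mul]
    · congr 1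
      rw [Finset.prod_const, Finset.card_range, ← Complex.exp_nat_mul, neg_eq_neg_one_mul (Complex.exp _), ← Complex.exp_pi_mul_I, ← Complex.exp_add, Complex.exp_eq_exp_iff_exists_int]
      refine ⟨-1, ?_⟩
      push_cast
      field_simp
      ring
    · have := pk_period N hN 0 z (N * tau)
      rw [zero_add] at this
      simpa using this

/-- Cleared-denominator version of the sum. -/
noncomputable def Afun (N : ℕ) (tau xi zeta : ℂ) : ℂ :=
  ∑ s ∈ Finset.range N, thetaChar (1/2) (1/2) (xi + (zeta + s) / N) tau *
    ∏ t ∈ (Finset.range N).erase s, thetaChar (1/2) (1/2) ((zeta + t) / N) tau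

lemma Afun_eq (N : ℕ) (hN : 1 ≤ N) {tau : ℂ} (ht : 0 < tau.im) (xi : ℂ) :
    ∃ C : ℂ, ∀ zeta, Afun N tau xi zeta = C * thetaChar (1/2) (1/2) (xi + zeta) (N * tau) := by
  have hN' : (N : ℂ) ≠ 0 := by exact_mod_cast (by omega : N ≠ 0)
  have htN : 0 < ((N : ℂ) * tau).im := by
    have h0 : (0:ℝ) < N := by exact_mod_cast hN
    simpa using mul_pos h0 ht
  suffices H : ∃ C : ℂ, ∀ z, Afun N tau xi (z - xi) = C * thetaChar (1/2) (1/2) z (N * tau) by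
    obtain ⟨C, hC⟩ := H
    refine ⟨C, fun zeta => ?_⟩
    rw [← hC, add_sub_cancel_left]
  refine uniq htN _ ?_ ?_ ?_
  · have hd := thetaChar_diff (1/2) (1/2) ht
    have hd1 : ∀ s : ℕ, Differentiable ℂ (fun z => thetaChar (1/2) (1/2) (xi + (z - xi + s) / N) tau) := by
      intro s
      exact hd.comp (g := fun z => thetaChar (1/2) (1/2) z tau) (f := fun z : ℂ => xi + (z - xi + s) / N) (by fun_prop)
    have hd2 : ∀ s : ℕ, Differentiable ℂ (fun z => thetaChar (1/2) (1/2) ((z - xi + s) / N) tau) := by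
      intro s
      exact hd.comp (g := fun z => thetaChar (1/2) (1/2) z tau) (f := fun z : ℂ => (z - xi + s) / N) (by fun_prop)
    unfold Afun
    fun_prop
  · intro z
    have := sum_shift (fun s => thetaChar (1/2) (1/2) (xi + (z - xi + s) / N) tau)
      (fun s => thetaChar (1/2) (1/2) ((z - xi + s) / N) tau) N hN ?_ ?_
    · unfold Afun
      rw [← this]
      have e : ∀ s : ℕ, z + 1 - xi + s = z - xi + ((s + 1 : ℕ) : ℂ) := by
        intro s; push_cast; ring
      simp only [e]
    · rw [← theta_one]
      congr 1
      push_cast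
      field_simp
      ring
    · rw [← theta_one]
      congr 1
      push_cast
      field_simp
      ring
  · intro z
    unfold Afun
    rw [Finset.mul_sum]
    refine Finset.sum_congr rfl fun s hs => ?_
    have e1 : xi + (z + N * tau - xi + s) / N = (xi + (z - xi + s) / N) + tau := by
      field_simp; ring
    have e2 : ∀ t : ℕ, (z + N * tau - xi + t) / N = ((z - xi + t) / N) + tau := by
      intro t; field_simp; ring
    rw [e1]
    simp only [e2, theta_tau]
    rw [Finset.prod_mul_distrib]
    have e3 : Complex.exp (-(Real.pi * I * tau) - 2 * Real.pi * I * (xi + (z - xi + s) / N + (1 / 2 : ℝ))) *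
       ∏ t ∈ (Finset.range N).erase s, Complex.exp (-(Real.pi * I * tau) - 2 * Real.pi * I * ((z - xi + t) / N + (1 / 2 : ℝ))) =
       - Complex.exp (-(Real.pi * I * (N * tau)) - 2 * Real.pi * I * z) := by
      have e4 : Complex.exp (-(Real.pi * I * tau) - 2 * Real.pi * I * (xi + (z - xi + s) / N + (1 / 2 : ℝ))) =
        Complex.exp (-(2 * Real.pi * I * xi)) *
        Complex.exp (-(Real.pi * I * tau) - 2 * Real.pi * I * ((z - xi + s) / N + (1 / 2 : ℝ))) := by
        rw [← Complex.exp_add]; congr 1; ring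
      rw [e4, mul_assoc, Finset.mul_prod_erase (Finset.range N) (fun t : ℕ => Complex.exp (-(Real.pi * I * tau) - 2 * Real.pi * I * ((z - xi + t) / N + (1 / 2 : ℝ)))) hs, ← Complex.exp_sum,
        neg_eq_neg_one_mul (Complex.exp _), ← Complex.exp_pi_mul_I, ← Complex.exp_add, ← Complex.exp_add,
        Complex.exp_eq_exp_iff_exists_int]
      refine ⟨-N, ?_⟩
      rw [Finset.sum_sub_distrib, ← Finset.mul_sum, Finset.sum_add_distrib, ← Finset.sum_div,
        Finset.sum_add_distrib, sum_range_c]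
      simp
      field_simp
      ring
    rw [← e3]
    ring

lemma entire_mul_zero {f g : ℂ → ℂ} (hf : Differentiable ℂ f) (hg : Differentiable ℂ g)
    (h : ∀ z, f z * g z = 0) (w : ℂ) (hw : f w ≠ 0) (z : ℂ) : g z = 0 := by
  have hev : ∀ᶠ u in nhds w, g u = 0 := by
    filter_upwards [hf.continuous.continuousAt.eventually_ne hw] with u hu
    exact (mul_eq_zero.1 (h u)).resolve_left hu
  have hga : AnalyticOnNhd ℂ g Set.univ := fun x _ => hg.analyticAt x
  have := hga.eq_of_eventuallyEq (g := fun _ => 0) (fun x _ => analyticAt_const) hev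
  exact congrFun this z

lemma range_split (N : ℕ) (hN : 1 ≤ N) (p : ℕ → ℂ) :
    ∏ k ∈ Finset.range N, p k = p 0 * ∏ k ∈ Finset.Icc 1 (N - 1), p k := by
  have : Finset.range N = insert 0 (Finset.Icc 1 (N - 1)) := by
    ext k; simp; omega
  rw [this, Finset.prod_insert (by simp)]

lemma core (N : ℕ) (hN : 1 ≤ N) (tau : ℂ) (htau : 0 < tau.im) (xi zeta : ℂ)
    (hden1 : ∀ s : ℕ, s < N → thetaChar (1 / 2) (1 / 2) ((zeta + s) / N) tau ≠ 0)
    (hden2 : thetaChar (1 / 2) (1 / 2) zeta ((N : ℂ) * tau) ≠ 0)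
    (hden3 : ∏ k ∈ Finset.Icc 1 (N - 1),
      thetaChar ((k : ℝ) / N + 1 / 2) (1 / 2) 0 ((N : ℂ) * tau) ≠ 0) :
    ∑ s ∈ Finset.range N, thetaChar (1/2) (1/2) (xi + (zeta + s) / N) tau /
        (N * thetaChar (1/2) (1/2) ((zeta + s) / N) tau)
      = thetaChar (1 / 2) (1 / 2) (xi + zeta) ((N : ℂ) * tau)
          / thetaChar (1 / 2) (1 / 2) zeta ((N : ℂ) * tau)
        * (∏ k ∈ Finset.Icc 1 (N - 1),
            thetaChar ((k : ℝ) / N + 1 / 2) (1 / 2) xi ((N : ℂ) * tau))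
        / ∏ k ∈ Finset.Icc 1 (N - 1),
            thetaChar ((k : ℝ) / N + 1 / 2) (1 / 2) 0 ((N : ℂ) * tau) := by
  have hN' : (N : ℂ) ≠ 0 := by exact_mod_cast (by omega : N ≠ 0)
  have htN : 0 < ((N : ℂ) * tau).im := by
    have h0 : (0:ℝ) < N := by exact_mod_cast hN
    simpa using mul_pos h0 htau
  obtain ⟨E, hE⟩ := prodP N hN htau
  choose C hC using Afun_eq N hN htau
  let T : ℂ → ℂ := fun z => thetaChar (1 / 2) (1 / 2) z ((N : ℂ) * tau)
  let Q : ℂ → ℂ := fun z => ∏ k ∈ Finset.Icc 1 (N - 1),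
            thetaChar ((k : ℝ) / N + 1 / 2) (1 / 2) z ((N : ℂ) * tau)
  have hTQ : ∀ z, T z * Q z = E * thetaChar (1/2) (1/2) z tau := by
    intro z
    rw [← hE, range_split N hN]
    simp [T, Q]
  have hTd : Differentiable ℂ T := thetaChar_diff _ _ htN
  have hQd : Differentiable ℂ Q := by
    have := fun k : ℕ => thetaChar_diff ((k : ℝ) / N + 1 / 2) (1 / 2) htN
    simp only [Q]
    fun_prop
  have hE0 : E ≠ 0 := by
    intro h0
    exact hden3 (entire_mul_zero hTd hQd (fun z => by rw [hTQ, h0, zero_mul]) zeta hden2 0)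
  let K : ℂ := ∏ t ∈ (Finset.range N).erase 0, thetaChar (1/2) (1/2) ((0 + (t:ℂ)) / N) tau
  have hA0 : ∀ x, Afun N tau x 0 = thetaChar (1/2) (1/2) x tau * K := by
    intro x
    unfold Afun
    rw [Finset.sum_eq_single 0]
    · simp [K]
    · intro s hs hs0
      rw [Finset.prod_eq_zero (i := 0), mul_zero]
      · simp; omega
      · simpa using theta_zero tau
    · intro h; simp at h; omega
  have hAd : Differentiable ℂ (fun x => Afun N tau x zeta) := by
    have hd := thetaChar_diff (1/2) (1/2) htau
    have hd1 : ∀ s : ℕ, Differentiable ℂ (fun z => thetaChar (1/2) (1/2) (z + (zeta + s) / N) tau) := by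
      intro s
      exact hd.comp (g := fun z => thetaChar (1/2) (1/2) z tau) (f := fun z : ℂ => z + (zeta + s) / N) (by fun_prop)
    unfold Afun
    fun_prop
  have hTd' : Differentiable ℂ (fun x => T (x + zeta)) :=
    hTd.comp (f := fun x : ℂ => x + zeta) (by fun_prop)
  have main : ∀ x, E * Afun N tau x zeta = K * Q x * T (x + zeta) := by
    intro x
    have := entire_mul_zero (f := T) (g := fun x => E * Afun N tau x zeta - K * Q x * T (x + zeta)) hTd
      (by fun_prop) ?_ zeta hden2 x
    · exact sub_eq_zero.1 this
    · intro z
      have h1 := hC z zeta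
      have h2 := hC z 0
      rw [hA0, add_zero] at h2
      have h3 := hTQ z
      change Afun N tau z zeta = C z * T (z + zeta) at h1
      change _ = C z * T z at h2
      rw [h1]
      linear_combination (-E) * T (z + zeta) * h2 - K * T (z + zeta) * h3
  let D : ℂ := ∏ t ∈ Finset.range N, thetaChar (1/2) (1/2) ((zeta + t) / N) tau
  have hD : D ≠ 0 := Finset.prod_ne_zero_iff.2 fun t h => hden1 t (Finset.mem_range.1 h)
  have hAz : Afun N tau 0 zeta = N * D := by
    unfold Afun
    rw [Finset.sum_congr rfl (g := fun _ => D)]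
    · simp
    · intro s hs
      rw [zero_add]
      exact Finset.mul_prod_erase (Finset.range N) (fun t : ℕ => thetaChar (1/2) (1/2) ((zeta + t) / N) tau) hs
  have hL : ∑ s ∈ Finset.range N, thetaChar (1/2) (1/2) (xi + (zeta + s) / N) tau /
        (N * thetaChar (1/2) (1/2) ((zeta + s) / N) tau) = Afun N tau xi zeta / (N * D) := by
    unfold Afun
    rw [Finset.sum_div]
    refine Finset.sum_congr rfl fun s hs => ?_
    have h1 := hden1 s (Finset.mem_range.1 hs)
    have h2 : D = _ := (Finset.mul_prod_erase (Finset.range N) (fun t : ℕ => thetaChar (1/2) (1/2) ((zeta + t) / N) tau) hs).symm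
    rw [div_eq_div_iff (by positivity) (by positivity), h2]
    ring
  rw [hL]
  change Afun N tau xi zeta / (N * D) = T (xi + zeta) / T zeta * Q xi / Q 0
  have m1 := main xi
  have m0 := main 0
  rw [hAz, zero_add] at m0
  have hT : T zeta ≠ 0 := hden2
  have hQ : Q 0 ≠ 0 := hden3
  have hK : K ≠ 0 := by
    intro h
    rw [h] at m0
    simp only [zero_mul] at m0
    exact mul_ne_zero hE0 (mul_ne_zero hN' hD) m0
  rw [div_mul_eq_mul_div, div_div, div_eq_div_iff (mul_ne_zero hN' hD) (mul_ne_zero hT hQ)]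
  apply mul_left_cancel₀ (mul_ne_zero hE0 hK)
  linear_combination K * (T zeta * Q 0) * m1 - K * T (xi + zeta) * Q xi * m0

lemma reindex (N b : ℕ) (hN : 1 ≤ N) (hb : b < N) (p : ℕ → ℂ) (hp : ∀ k, p (k + N) = p k) :
    ∏ k ∈ Finset.Icc 1 (N - 1), p (k + b) = ∏ k ∈ (Finset.range N).erase b, p k := by
  refine Finset.prod_nbij' (fun k => if k + b < N then k + b else k + b - N)
    (fun k => if b < k then k - b else k + N - b) ?_ ?_ ?_ ?_ ?_
  · intro k hk
    simp only [Finset.mem_Icc, Finset.mem_erase, Finset.mem_range] at *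
    split_ifs <;> omega
  · intro k hk
    simp only [Finset.mem_Icc, Finset.mem_erase, Finset.mem_range] at *
    split_ifs <;> omega
  · intro k hk
    simp only [Finset.mem_Icc, Finset.mem_erase, Finset.mem_range] at *
    split_ifs <;> omega
  · intro k hk
    simp only [Finset.mem_Icc, Finset.mem_erase, Finset.mem_range] at *
    split_ifs <;> omega
  · intro k hk
    split_ifs with h
    · rfl
    · rw [← hp (k + b - N)]
      congr 1
      omega

lemma theta_nat (b : ℕ) (u tau : ℂ) :
    thetaChar (1/2) (1/2) (u + b * tau) tau =
      Complex.exp (-(Real.pi * I * b ^ 2 * tau) - 2 * Real.pi * I * b * (u + 1/2)) *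
        thetaChar (1/2) (1/2) u tau := by
  have h := thetaChar_shift b (1/2) (1/2) u tau
  have h2 := thetaChar_int b (1/2) (1/2) u tau
  push_cast at h h2
  rw [h2] at h
  exact h

lemma alg1 {e1 e2 e3 m w n X Y : ℂ} (h3 : e3 ≠ 0) (h : e1 * e2 = m * w * e3) :
    e1 * (e2 * Y) / (n * (e3 * X)) = m * (Y / (n * X) * w) := by
  have : e1 * (e2 * Y) / (n * (e3 * X)) = (e1 * e2 / e3) * (Y / (n * X)) := by
    simp only [div_eq_mul_inv, mul_inv]; ring
  rw [this, h, mul_div_assoc, div_self h3]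
  ring

lemma alg2 {e1 e2 e3 m U V P Z : ℂ} (h3 : e3 ≠ 0) (h : e1 * e2 = m * e3) :
    e1 * U / (e3 * V) * (e2 * P) / Z = m * (U / V * P / Z) := by
  have : e1 * U / (e3 * V) * (e2 * P) / Z = (e1 * e2 / e3) * (U / V * P / Z) := by
    simp only [div_eq_mul_inv, mul_inv]; ring
  rw [this, h, mul_div_assoc, div_self h3]
  ring

/-- The discrete Fourier transform of the Boltzmann weights:
`∑_{s=0}^{N−1} W_{(−a,s)}(ξ,ζ,τ) ω^{−bs}` equals the explicit theta-function product `S^{ab}`,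
for all `a, b ∈ {0,…,N−1}`, whenever no denominator vanishes. -/
theorem stmt6 (N : ℕ) (hN : 1 ≤ N) (tau : ℂ) (htau : 0 < tau.im) (xi zeta : ℂ)
    (a b : ℕ) (ha : a < N) (hb : b < N)
    (hden1 : ∀ s : ℕ, s < N →
      thetaChar (1 / 2 + ((-(a : ℤ) : ℤ) : ℝ) / N) (1 / 2 + (s : ℝ) / N) (zeta / N) tau ≠ 0)
    (hden2 : thetaChar (-(a : ℝ) / N + 1 / 2) (1 / 2) zeta ((N : ℂ) * tau) ≠ 0)
    (hden3 : ∏ k ∈ Finset.Icc 1 (N - 1),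
      thetaChar ((k : ℝ) / N + 1 / 2) (1 / 2) 0 ((N : ℂ) * tau) ≠ 0) :
    ∑ s ∈ Finset.range N, Wfun N (-(a : ℤ)) (s : ℤ) xi zeta tau
        * (Complex.exp (2 * (Real.pi : ℂ) * I / N)) ^ (-((b : ℤ) * (s : ℤ)))
      = thetaChar (((b : ℝ) - (a : ℝ)) / N + 1 / 2) (1 / 2) (xi + zeta) ((N : ℂ) * tau)
          / thetaChar (-(a : ℝ) / N + 1 / 2) (1 / 2) zeta ((N : ℂ) * tau)
        * (∏ k ∈ (Finset.range N).erase b,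
            thetaChar ((k : ℝ) / N + 1 / 2) (1 / 2) xi ((N : ℂ) * tau))
        / ∏ k ∈ Finset.Icc 1 (N - 1),
            thetaChar ((k : ℝ) / N + 1 / 2) (1 / 2) 0 ((N : ℂ) * tau) := by
  have hN' : (N : ℂ) ≠ 0 := by exact_mod_cast (by omega : N ≠ 0)
  -- the first-characteristic shift
  have hS : ∀ (s : ℕ) (u : ℂ), thetaChar (1/2) (1/2) (u + s / N - a / N * tau) tau =
      Complex.exp (-(Real.pi * I * (a / N) ^ 2 * tau) + 2 * Real.pi * I * (a / N) * (u + 1/2 + s / N)) *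
      thetaChar (1 / 2 + ((-(a : ℤ) : ℤ) : ℝ) / N) (1 / 2 + (s : ℝ) / N) u tau := by
    intro s u
    have h := thetaChar_shift (((-(a : ℤ) : ℤ) : ℝ) / N) (1/2) (1 / 2 + (s : ℝ) / N) u tau
    rw [thetaChar_g2] at h
    have e : u + ((((-(a : ℤ) : ℤ) : ℝ) / N : ℝ) : ℂ) * tau + (((s : ℝ) / N : ℝ) : ℂ) = u + s / N - a / N * tau := by
      push_cast; ring
    rw [e] at h
    rw [h]
    congr 2
    push_cast
    ring
  have hT1 : thetaChar (1/2) (1/2) (zeta - a * tau) (N * tau) =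
      Complex.exp (-(Real.pi * I * a ^ 2 * tau / N) + 2 * Real.pi * I * (a / N) * (zeta + 1/2)) *
      thetaChar (-(a : ℝ) / N + 1 / 2) (1 / 2) zeta ((N : ℂ) * tau) := by
    have h := thetaChar_shift (-(a : ℝ) / N) (1/2) (1/2) zeta (N * tau)
    have e : zeta + ((-(a : ℝ) / N : ℝ) : ℂ) * (N * tau) = zeta - a * tau := by
      push_cast; field_simp; ring
    rw [e, add_comm (1/2 : ℝ)] at h
    rw [h]
    congr 2
    push_cast
    field_simp
    ring
  have hT2 : thetaChar (1/2) (1/2) (xi + b * tau + (zeta - a * tau)) (N * tau) =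
      Complex.exp (-(Real.pi * I * (b - a) ^ 2 * tau / N) - 2 * Real.pi * I * ((b - a) / N) * (xi + zeta + 1/2)) *
      thetaChar (((b : ℝ) - (a : ℝ)) / N + 1 / 2) (1 / 2) (xi + zeta) ((N : ℂ) * tau) := by
    have h := thetaChar_shift (((b : ℝ) - (a : ℝ)) / N) (1/2) (1/2) (xi + zeta) (N * tau)
    have e : xi + zeta + ((((b : ℝ) - (a : ℝ)) / N : ℝ) : ℂ) * (N * tau) = xi + b * tau + (zeta - a * tau) := by
      push_cast; field_simp; ring
    rw [e, add_comm (1/2 : ℝ)] at h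
    rw [h]
    congr 2
    push_cast
    field_simp
  have hz : ∀ s : ℕ, (zeta - a * tau + s) / N = zeta / N + s / N - a / N * tau := by
    intro s; field_simp; ring
  have hc := core N hN tau htau (xi + b * tau) (zeta - a * tau) ?_ ?_ hden3
  rotate_left
  · intro s hs
    rw [hz, hS]
    exact mul_ne_zero (Complex.exp_ne_zero _) (hden1 s hs)
  · rw [hT1]
    exact mul_ne_zero (Complex.exp_ne_zero _) hden2
  let M : ℂ := Complex.exp (-(Real.pi * I * b ^ 2 * tau) - 2 * Real.pi * I * b * (xi + zeta / N - a / N * tau + 1/2)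
    + 2 * Real.pi * I * (a / N) * xi)
  have hM : M ≠ 0 := Complex.exp_ne_zero _
  have hLterm : ∀ s ∈ Finset.range N, thetaChar (1/2) (1/2) (xi + b * tau + (zeta - a * tau + s) / N) tau /
        (N * thetaChar (1/2) (1/2) ((zeta - a * tau + s) / N) tau) =
      M * (Wfun N (-(a : ℤ)) (s : ℤ) xi zeta tau
        * (Complex.exp (2 * (Real.pi : ℂ) * I / N)) ^ (-((b : ℤ) * (s : ℤ)))) := by
    intro s hs
    have h1 := hden1 s (Finset.mem_range.1 hs)
    have e : xi + b * tau + (zeta - a * tau + s) / N = (xi + zeta / N + s / N - a / N * tau) + b * tau := by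
      rw [hz]; ring
    rw [e, theta_nat, hS, hz, hS, ← Complex.exp_int_mul]
    unfold Wfun
    rw [Int.cast_natCast (R := ℝ) s]
    refine alg1 (Complex.exp_ne_zero _) ?_
    simp only [M]
    rw [← Complex.exp_add, ← Complex.exp_add, ← Complex.exp_add]
    congr 1
    push_cast
    ring
  rw [Finset.sum_congr rfl hLterm, ← Finset.mul_sum, hT1, hT2] at hc
  simp only [pk_shift N hN] at hc
  rw [Finset.prod_mul_distrib, reindex N b hN hb (fun k : ℕ => thetaChar ((k : ℝ) / N + 1 / 2) (1 / 2) xi (N * tau))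
    (fun k => pk_period N hN k xi _), Finset.prod_const, Nat.card_Icc, ← Complex.exp_nat_mul] at hc
  apply mul_left_cancel₀ hM
  rw [hc]
  have hexp : Complex.exp (-(Real.pi * I * (b - a) ^ 2 * tau / N) - 2 * Real.pi * I * ((b - a) / N) * (xi + zeta + 1/2)) *
      Complex.exp (((N - 1 + 1 - 1 : ℕ) : ℂ) * (-(Real.pi * I * b ^ 2 * tau / N) - 2 * Real.pi * I * (b / N) * (xi + 1 / 2))) =
      M * Complex.exp (-(Real.pi * I * a ^ 2 * tau / N) + 2 * Real.pi * I * (a / N) * (zeta + 1/2)) := by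
    simp only [M]
    rw [← Complex.exp_add, ← Complex.exp_add]
    congr 1
    rw [Nat.add_sub_cancel, Nat.cast_sub hN]
    push_cast
    field_simp
    ring
  exact alg2 (Complex.exp_ne_zero _) hexp
end

section
/- Let N ≥ 1 be an integer, τ ∈ ℂ with Im τ > 0, and ξ, ζ ∈ ℂ generic (so that no denominator below vanishes). For integers a, b let S^{ab}(ξ,ζ,τ) = ( ϑ[(b−a)/N + 1/2, 1/2](ξ+ζ, Nτ) / ϑ[−a/N + 1/2, 1/2](ζ, Nτ) ) · ( ∏_{k=0, k≠b mod N}^{N−1} ϑ[k/N + 1/2, 1/2](ξ, Nτ) ) / ( ∏_{k=1}^{N−1} ϑ[k/N + 1/2, 1/2](0, Nτ) ), where a, b are read modulo N. Then for all i, j ∈ {0,…,N−1} the following unitarity identity holds: ∑_{k=0}^{N−1} S^{−i−k, i−k}(ξ, ζ, τ) · S^{−j−k, k−j}(−ξ, ζ, τ) = ( ϑ[1/2,1/2](ξ+ζ, τ) · ϑ[1/2,1/2](−ξ+ζ, τ) / ϑ[1/2,1/2](ζ, τ)² ) · δ_{ij}, where δ_{ij} is the Kronecker delta. -/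
open Complex

/-- The nonvanishing entries `S^{ab}(ξ,ζ,τ)` of the ℤ_N-symmetric elliptic R-matrix,
with indices `a, b` read modulo `N`:
`S^{ab} = (ϑ[(b−a)/N+1/2,1/2](ξ+ζ,Nτ)/ϑ[−a/N+1/2,1/2](ζ,Nτ))
  (∏_{k=0,k≠b mod N}^{N−1} ϑ[k/N+1/2,1/2](ξ,Nτ)) / (∏_{k=1}^{N−1} ϑ[k/N+1/2,1/2](0,Nτ))`. -/
noncomputable def Smat (N : ℕ) (xi zeta tau : ℂ) (a b : ℤ) : ℂ :=
  thetaChar (((b : ℝ) - (a : ℝ)) / N + 1 / 2) (1 / 2) (xi + zeta) ((N : ℂ) * tau)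
    / thetaChar (-(a : ℝ) / N + 1 / 2) (1 / 2) zeta ((N : ℂ) * tau)
    * (∏ k ∈ (Finset.range N).filter (fun k : ℕ => (k : ℤ) % (N : ℤ) ≠ b % (N : ℤ)),
        thetaChar ((k : ℝ) / N + 1 / 2) (1 / 2) xi ((N : ℂ) * tau))
    / ∏ k ∈ Finset.Icc 1 (N - 1),
        thetaChar ((k : ℝ) / N + 1 / 2) (1 / 2) 0 ((N : ℂ) * tau)


/-- Reduction of the theta function with characteristics to the Mathlib function `jacobiTheta₂`. -/
theorem tc_eq (g1 g2 : ℝ) (x t : ℂ) : thetaChar g1 g2 x t =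
    cexp (Real.pi * I * g1 ^ 2 * t + 2 * Real.pi * I * g1 * (x + g2))
      * jacobiTheta₂ (x + g2 + g1 * t) t := by
  unfold thetaChar jacobiTheta₂
  rw [← tsum_mul_left]
  refine tsum_congr fun m => ?_
  unfold jacobiTheta₂_term
  rw [← Complex.exp_add]
  congr 1
  ring

theorem tc_add_int (g1 g2 : ℝ) (x t : ℂ) (n : ℤ) :
    thetaChar (g1 + n) g2 x t = thetaChar g1 g2 x t := by
  unfold thetaChar
  rw [← (Equiv.addRight n).tsum_eq (fun m : ℤ => cexp ((Real.pi : ℂ) * I * ((m : ℂ) + (g1 : ℂ)) ^ 2 * t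
      + 2 * (Real.pi : ℂ) * I * ((m : ℂ) + (g1 : ℂ)) * (x + (g2 : ℂ))))]
  refine tsum_congr fun m => ?_
  simp only [Equiv.coe_addRight]
  congr 1
  push_cast
  ring

theorem tc_diff (g1 g2 : ℝ) {t : ℂ} (ht : 0 < t.im) :
    Differentiable ℂ (fun x => thetaChar g1 g2 x t) := by
  have h : (fun x => thetaChar g1 g2 x t) = fun x =>
    cexp (Real.pi * I * g1 ^ 2 * t + 2 * Real.pi * I * g1 * (x + g2))
      * jacobiTheta₂ (x + g2 + g1 * t) t := by
    funext x; exact tc_eq g1 g2 x t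
  rw [h]
  intro x
  refine DifferentiableAt.mul (by fun_prop) ?_
  exact (differentiableAt_jacobiTheta₂_fst (x + g2 + g1 * t) ht).comp x
    (f := fun x => x + (g2 : ℂ) + g1 * t) (by fun_prop)

/-- The odd theta function. -/
noncomputable def th (t x : ℂ) : ℂ := thetaChar (1 / 2) (1 / 2) x t

theorem th_eq (t x : ℂ) : th t x =
    cexp (Real.pi * I * t / 4 + Real.pi * I * (x + 1 / 2)) * jacobiTheta₂ (x + 1 / 2 + t / 2) t := by
  unfold th
  rw [tc_eq]
  push_cast
  congr 2 <;> ring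

theorem th_diff {t : ℂ} (ht : 0 < t.im) : Differentiable ℂ (th t) := tc_diff _ _ ht

theorem exp_eq_neg_exp {u v : ℂ} (n : ℤ) (h : u = v + Real.pi * I + n * (2 * Real.pi * I)) :
    cexp u = - cexp v := by
  rw [h, Complex.exp_add, Complex.exp_int_mul_two_pi_mul_I, Complex.exp_add, Complex.exp_pi_mul_I]
  ring

theorem th_add_one (t x : ℂ) : th t (x + 1) = - th t x := by
  rw [th_eq, th_eq, show x + 1 + 1 / 2 + t / 2 = (x + 1 / 2 + t / 2) + 1 by ring,
    jacobiTheta₂_add_left, show (Real.pi * I * t / 4 + Real.pi * I * (x + 1 + 1 / 2) : ℂ) =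
      (Real.pi * I * t / 4 + Real.pi * I * (x + 1 / 2)) + Real.pi * I by ring, Complex.exp_add,
    Complex.exp_pi_mul_I]
  ring

theorem th_add_t (t x : ℂ) : th t (x + t) =
    - cexp (-Real.pi * I * t - 2 * Real.pi * I * x) * th t x := by
  rw [th_eq, th_eq, show x + t + 1 / 2 + t / 2 = (x + 1 / 2 + t / 2) + t by ring,
    jacobiTheta₂_add_left', ← mul_assoc, ← mul_assoc, ← Complex.exp_add]
  congr 1
  rw [neg_mul (cexp _), ← Complex.exp_add]
  refine exp_eq_neg_exp (-1) ?_
  push_cast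
  ring

theorem th_neg (t x : ℂ) : th t (-x) = - th t x := by
  rw [th_eq, th_eq, show -x + 1 / 2 + t / 2 = -((x + 1 / 2 + t / 2) - t + -1) by ring,
    jacobiTheta₂_neg_left]
  have h2 : jacobiTheta₂ ((x + 1 / 2 + t / 2) - t + -1) t = jacobiTheta₂ ((x + 1 / 2 + t / 2) - t) t := by
    rw [← jacobiTheta₂_add_left]; ring_nf
  have h3 := jacobiTheta₂_add_left' ((x + 1 / 2 + t / 2) - t) t
  rw [sub_add_cancel] at h3
  rw [h2, h3, ← mul_assoc, ← Complex.exp_add, ← neg_mul]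
  congr 1
  refine exp_eq_neg_exp 0 ?_
  push_cast
  ring

theorem th_zero (t : ℂ) : th t 0 = 0 := by
  have := th_neg t 0
  rw [neg_zero] at this
  exact self_eq_neg.mp this

/-- The two even functions of level two. -/
noncomputable def tha (t x : ℂ) : ℂ := jacobiTheta₂ (2 * x) (2 * t)
noncomputable def thb (t x : ℂ) : ℂ :=
  cexp (Real.pi * I * t / 2 + 2 * Real.pi * I * x) * jacobiTheta₂ (2 * x + t) (2 * t)

theorem tha_diff {t : ℂ} (ht : 0 < t.im) : Differentiable ℂ (tha t) := by
  intro x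
  have h2 : 0 < (2 * t).im := by simpa using ht
  exact (differentiableAt_jacobiTheta₂_fst (2 * x) h2).comp x
    (f := fun x => 2 * x) (by fun_prop)

theorem thb_diff {t : ℂ} (ht : 0 < t.im) : Differentiable ℂ (thb t) := by
  intro x
  have h2 : 0 < (2 * t).im := by simpa using ht
  refine DifferentiableAt.mul (by fun_prop) ?_
  exact (differentiableAt_jacobiTheta₂_fst (2 * x + t) h2).comp x
    (f := fun x => 2 * x + t) (by fun_prop)

/-- parity splitting of `ℤ × ℤ` -/
def parEquiv : (ℤ × ℤ) ⊕ (ℤ × ℤ) ≃ ℤ × ℤ where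
  toFun := Sum.elim (fun p => (p.1 + p.2, p.1 - p.2 - 1)) (fun p => (p.1 + p.2, p.1 - p.2))
  invFun := fun p => if (p.1 + p.2) % 2 = 0 then Sum.inr ((p.1 + p.2) / 2, (p.1 - p.2) / 2)
    else Sum.inl ((p.1 + p.2 + 1) / 2, (p.1 - p.2 - 1) / 2)
  left_inv := by
    rintro (⟨u, v⟩ | ⟨u, v⟩)
    · simp only [Sum.elim_inl]
      refine (if_neg (by omega)).trans ?_
      congr 2 <;> omega
    · simp only [Sum.elim_inr]
      refine (if_pos (by omega)).trans ?_
      congr 2 <;> omega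
  right_inv := by
    rintro ⟨m, n⟩
    dsimp only
    split_ifs with h
    · simp only [Sum.elim_inr, Prod.mk.injEq]; constructor <;> omega
    · simp only [Sum.elim_inl, Prod.mk.injEq]; constructor <;> omega

theorem hasSum_congr_fun {ι : Type*} {f g : ι → ℂ} {a : ℂ} (h : HasSum f a)
    (hfg : ∀ i, g i = f i) : HasSum g a := by
  rwa [show g = f from funext hfg]

theorem hasSum_mul_aux {f g : ℤ → ℂ} {a b : ℂ} (hf : HasSum f a) (hg : HasSum g b) :
    HasSum (fun p : ℤ × ℤ => f p.1 * g p.2) (a * b) :=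
  hf.mul hg (summable_mul_of_summable_norm hf.summable.norm hg.summable.norm)

theorem th_prod {t : ℂ} (ht : 0 < t.im) (x y : ℂ) :
    th t (x + y) * th t (x - y) = tha t x * thb t y - thb t x * tha t y := by
  have h2 : 0 < (2 * t).im := by simpa using ht
  have hs : ∀ z, Summable (fun m : ℤ => cexp ((Real.pi : ℂ) * I * ((m : ℂ) + ((1 / 2 : ℝ) : ℂ)) ^ 2 * t
      + 2 * (Real.pi : ℂ) * I * ((m : ℂ) + ((1 / 2 : ℝ) : ℂ)) * (z + ((1 / 2 : ℝ) : ℂ)))) := by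
    intro z
    have := ((summable_jacobiTheta₂_term_iff (z + 1 / 2 + t / 2) t).2 ht).mul_left
      (cexp (Real.pi * I * t / 4 + Real.pi * I * (z + 1 / 2)))
    refine this.congr fun m => ?_
    unfold jacobiTheta₂_term
    rw [← Complex.exp_add]
    congr 1
    push_cast
    ring
  have hA : ∀ z, HasSum (fun m : ℤ => cexp (2 * Real.pi * I * t * m ^ 2 + 4 * Real.pi * I * m * z))
      (tha t z) := by
    intro z
    have := hasSum_jacobiTheta₂_term (2 * z) h2
    refine hasSum_congr_fun this fun m => ?_
    unfold jacobiTheta₂_term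
    congr 1
    ring
  have hB : ∀ z, HasSum (fun m : ℤ => cexp (2 * Real.pi * I * t * (m + 1 / 2) ^ 2
      + 4 * Real.pi * I * (m + 1 / 2) * z))
      (thb t z) := by
    intro z
    have := (hasSum_jacobiTheta₂_term (2 * z + t) h2).mul_left
      (cexp (Real.pi * I * t / 2 + 2 * Real.pi * I * z))
    refine hasSum_congr_fun this fun m => ?_
    unfold jacobiTheta₂_term
    rw [← Complex.exp_add]
    congr 1
    ring
  have hL := hasSum_mul_aux (hs (x + y)).hasSum (hs (x - y)).hasSum
  have h1 := hasSum_mul_aux (hA x) (hB y)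
  have h3 := hasSum_mul_aux (hB x) (hA y)
  rw [sub_eq_add_neg]
  refine HasSum.unique hL ?_
  rw [← parEquiv.hasSum_iff]
  refine HasSum.sum (hasSum_congr_fun h1 ?_) (hasSum_congr_fun h3.neg ?_)
  · rintro ⟨u, v⟩
    simp only [Function.comp, parEquiv, Equiv.coe_fn_mk, Sum.elim_inl]
    rw [← Complex.exp_add, ← Complex.exp_add, Complex.exp_eq_exp_iff_exists_int]
    refine ⟨u, ?_⟩
    push_cast
    ring
  · rintro ⟨u, v⟩
    simp only [Function.comp, parEquiv, Equiv.coe_fn_mk, Sum.elim_inr]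
    rw [← Complex.exp_add, ← Complex.exp_add]
    refine exp_eq_neg_exp u ?_
    push_cast
    ring

theorem th_three {t : ℂ} (ht : 0 < t.im) (A B d e : ℂ) :
    th t (A + B + e) * th t e * th t (A - B + d) * th t (-d)
      = th t (A + e) * th t (B + e) * th t (A + d) * th t (B - d)
        - th t (A + d + e) * th t (B - d + e) * th t A * th t B := by
  have h1 := th_prod ht ((A + B) / 2 + e) ((A + B) / 2)
  have h2 := th_prod ht ((A - B) / 2) ((A - B) / 2 + d)
  have h3 := th_prod ht ((A + B) / 2 + e) ((A - B) / 2)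
  have h4 := th_prod ht ((A + B) / 2) ((A - B) / 2 + d)
  have h5 := th_prod ht ((A + B) / 2 + e) ((A - B) / 2 + d)
  have h6 := th_prod ht ((A + B) / 2) ((A - B) / 2)
  rw [show (A + B) / 2 + e + (A + B) / 2 = A + B + e by ring,
    show (A + B) / 2 + e - (A + B) / 2 = e by ring] at h1
  rw [show (A - B) / 2 + ((A - B) / 2 + d) = A - B + d by ring,
    show (A - B) / 2 - ((A - B) / 2 + d) = -d by ring] at h2
  rw [show (A + B) / 2 + e + (A - B) / 2 = A + e by ring,
    show (A + B) / 2 + e - (A - B) / 2 = B + e by ring] at h3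
  rw [show (A + B) / 2 + ((A - B) / 2 + d) = A + d by ring,
    show (A + B) / 2 - ((A - B) / 2 + d) = B - d by ring] at h4
  rw [show (A + B) / 2 + e + ((A - B) / 2 + d) = A + d + e by ring,
    show (A + B) / 2 + e - ((A - B) / 2 + d) = B - d + e by ring] at h5
  rw [show (A + B) / 2 + (A - B) / 2 = A by ring,
    show (A + B) / 2 - (A - B) / 2 = B by ring] at h6
  rw [h1, mul_assoc (_ - _), h2, h3, mul_assoc (_ - _), h4, h5, mul_assoc (_ - _), h6]
  ring

theorem hd_add {f : ℂ → ℂ} (hf : Differentiable ℂ f) (c x : ℂ) :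
    HasDerivAt (fun e => f (c + e)) (deriv f (c + x)) x :=
  (hf (c + x)).hasDerivAt.comp_const_add c x

theorem hd_sub {f : ℂ → ℂ} (hf : Differentiable ℂ f) (c x : ℂ) :
    HasDerivAt (fun e => f (c - e)) (-deriv f (c - x)) x :=
  (hf (c - x)).hasDerivAt.comp_const_sub c x

theorem th_K {t : ℂ} (ht : 0 < t.im) (A B d : ℂ) :
    deriv (th t) 0 * th t (A + B) * th t (A - B + d) * th t (-d)
      = (deriv (th t) A * th t B + th t A * deriv (th t) B) * th t (A + d) * th t (B - d)
        - (deriv (th t) (A + d) * th t (B - d) + th t (A + d) * deriv (th t) (B - d))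
          * th t A * th t B := by
  have hf := th_diff ht
  have h1 := ((((hd_add hf (A + B) 0).mul (hf 0).hasDerivAt).mul_const
    (th t (A - B + d))).mul_const (th t (-d)))
  have h2 := (((((hd_add hf A 0).mul (hd_add hf B 0)).mul_const
    (th t (A + d))).mul_const (th t (B - d))).sub
    ((((hd_add hf (A + d) 0).mul (hd_add hf (B - d) 0)).mul_const
    (th t A)).mul_const (th t B)))
  have h3 := h1.unique (h2.congr_of_eventuallyEq
    (Filter.Eventually.of_forall fun e => th_three ht A B d e))
  simp only [add_zero, th_zero, mul_zero, zero_add] at h3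
  linear_combination h3

theorem th_K2 {t : ℂ} (ht : 0 < t.im) (A B : ℂ) :
    deriv (th t) 0 ^ 2 * th t (A + B) * th t (A - B)
      = th t B ^ 2 * (deriv (deriv (th t)) A * th t A - deriv (th t) A ^ 2)
        - th t A ^ 2 * (deriv (deriv (th t)) B * th t B - deriv (th t) B ^ 2) := by
  have hf := th_diff ht
  have hf' : Differentiable ℂ (deriv (th t)) := hf.deriv
  have hn : HasDerivAt (fun e => th t (-e)) (-deriv (th t) 0) 0 := by
    have := hd_sub hf 0 0
    simpa using this
  have h1 := ((hd_add hf (A - B) 0).const_mul (deriv (th t) 0 * th t (A + B))).mul hn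
  have h2 := (((hd_add hf A 0).const_mul (deriv (th t) A * th t B + th t A * deriv (th t) B)).mul
    (hd_sub hf B 0)).sub (((((hd_add hf' A 0).mul (hd_sub hf B 0)).add
      ((hd_add hf A 0).mul (hd_sub hf' B 0))).mul_const (th t A)).mul_const (th t B))
  have h3 := h1.unique (h2.congr_of_eventuallyEq
    (Filter.Eventually.of_forall fun e => th_K ht A B e))
  simp only [add_zero, sub_zero, neg_zero, th_zero, mul_zero, zero_add] at h3
  linear_combination -h3

theorem entire_eq_of_eventually {f g : ℂ → ℂ} (hf : Differentiable ℂ f) (hg : Differentiable ℂ g)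
    {z : ℂ} (h : f =ᶠ[nhds z] g) : f = g :=
  AnalyticOnNhd.eq_of_eventuallyEq
    (fun x _ => hf.analyticAt x) (fun x _ => hg.analyticAt x) h

theorem th_deriv_ne {t : ℂ} (ht : 0 < t.im) {z : ℂ} (hz : th t z ≠ 0) : deriv (th t) 0 ≠ 0 := by
  intro h0
  have hf := th_diff ht
  have ha := tha_diff ht
  have hb := thb_diff ht
  have hW : ∀ y, deriv (tha t) y * thb t y - deriv (thb t) y * tha t y = 0 := by
    intro y
    have h1 : HasDerivAt (fun x => th t (x + y) * th t (x - y))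
        (deriv (th t) (y + y) * th t (y - y) + th t (y + y) * deriv (th t) (y - y)) y :=
      ((hf (y + y)).hasDerivAt.comp_add_const y y).mul ((hf (y - y)).hasDerivAt.comp_sub_const y y)
    have h2 := ((ha y).hasDerivAt.mul_const (thb t y)).sub ((hb y).hasDerivAt.mul_const (tha t y))
    have h3 := h1.unique (h2.congr_of_eventuallyEq
      (Filter.Eventually.of_forall fun e => th_prod ht e y))
    rw [← h3, sub_self, h0, th_zero]
    ring
  have hne : ∃ y, thb t y ≠ 0 := by
    by_contra! hcon
    have := th_prod ht (z / 2 + 0) (z / 2 - 0)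
    have h5 : th t z * th t z = 0 := by
      have := th_prod ht z 0
      rw [hcon, hcon] at this
      simpa using this
    exact hz (by simpa using h5)
  obtain ⟨y, hy⟩ := hne
  have hev : ∀ᶠ x in nhds y, thb t x ≠ 0 := hb.continuous.continuousAt.eventually_ne hy
  obtain ⟨r, hr, hball⟩ := Metric.eventually_nhds_iff_ball.1 hev
  have hconst : ∀ x ∈ Metric.ball y r, tha t x / thb t x = tha t y / thb t y := by
    intro x hx
    refine (convex_ball y r).is_const_of_fderivWithin_eq_zero (𝕜 := ℂ)
      (f := fun x => tha t x / thb t x) ?_ ?_ hx (Metric.mem_ball_self hr)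
    · intro w hw
      exact ((ha w).div (hb w) (hball w hw)).differentiableWithinAt
    · intro w hw
      rw [fderivWithin_of_isOpen Metric.isOpen_ball hw]
      have h6 := (ha w).hasDerivAt.div (hb w).hasDerivAt (hball w hw)
      have h7 : (deriv (tha t) w * thb t w - tha t w * deriv (thb t) w) / thb t w ^ 2 = 0 := by
        rw [show deriv (tha t) w * thb t w - tha t w * deriv (thb t) w = 0 by
          linear_combination hW w, zero_div]
      rw [h7] at h6
      have h8 := h6.hasFDerivAt.fderiv
      have h10 : fderiv ℂ (fun x => tha t x / thb t x) w = _ := h8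
      rw [h10]
      ext
      simp
  have hab : tha t = fun x => (tha t y / thb t y) * thb t x := by
    refine entire_eq_of_eventually ha (hb.const_mul _) (z := y) ?_
    filter_upwards [Metric.ball_mem_nhds y hr] with x hx
    rw [← hconst x hx, div_mul_cancel₀ _ (hball x hx)]
  have h9 := th_prod ht z 0
  rw [hab] at h9
  simp only [add_zero, sub_zero] at h9
  apply hz
  have : th t z * th t z = 0 := by rw [h9]; ring
  simpa using this

theorem integral_shift {H : ℂ → ℂ} (hH : Differentiable ℂ H) (hp : ∀ x, H (x + 1) = H x) (w : ℂ) :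
    ∫ x in (0 : ℝ)..1, H (x + w) = ∫ x in (0 : ℝ)..1, H x := by
  obtain ⟨Q, hQ⟩ := hH.isExactOn_univ
  have hQ' : ∀ z, HasDerivAt Q (H z) z := fun z => hQ z (Set.mem_univ z)
  have key : ∀ w : ℂ, ∫ x in (0 : ℝ)..1, H (x + w) = Q (w + 1) - Q w := by
    intro w
    have h1 := intervalIntegral.integral_eq_sub_of_hasDerivAt (a := (0 : ℝ)) (b := 1)
      (f := fun x : ℝ => Q (x + w)) (f' := fun x : ℝ => H (x + w)) ?_ ?_
    · rw [h1]; simp [add_comm]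
    · intro x _
      exact ((hQ' (x + w)).comp_add_const (x : ℂ) w).comp_ofReal
    · apply Continuous.intervalIntegrable
      have := hH.continuous
      fun_prop
  have h0 := key 0
  simp only [add_zero] at h0
  rw [key w, h0]
  have hd : ∀ z, HasDerivAt (fun w => Q (w + 1) - Q w) 0 z := by
    intro z
    have := ((hQ' (z + 1)).comp_add_const z 1).sub (hQ' z)
    rwa [hp, sub_self] at this
  have := is_const_of_deriv_eq_zero (fun z => (hd z).differentiableAt) (fun z => (hd z).deriv) w 0
  simpa using this

/-- An entire 1-periodic function with vanishing Fourier coefficients is zero. -/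
theorem fourier_zero_of {G : ℂ → ℂ} (hG : Differentiable ℂ G) (hp : ∀ x, G (x + 1) = G x)
    (h : ∀ n : ℤ, ∫ x in (0 : ℝ)..1, cexp (-2 * Real.pi * I * n * x) * G x = 0) (z : ℂ) : G z = 0 := by
  have hF : Fact ((0 : ℝ) < 1) := ⟨one_pos⟩
  have hper : Function.Periodic (fun x : ℝ => G x) 1 := fun x => by
    have := hp x
    simpa using this
  have hc : Continuous (fun x : ℝ => G x) := hG.continuous.comp continuous_ofReal
  let g : C(AddCircle (1 : ℝ), ℂ) := ⟨hper.lift, continuous_coinduced_dom.mpr hc⟩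
  have hcoef : ∀ n, fourierCoeff g n = 0 := by
    intro n
    rw [fourierCoeff_eq_intervalIntegral g n 0]
    have := h n
    simp only [zero_add, div_one, one_smul]
    rw [← this]
    refine intervalIntegral.integral_congr fun x _ => ?_
    simp only [fourier_coe_apply, smul_eq_mul]
    congr 1
    congr 1
    push_cast
    ring
  have hz : ∀ x : ℝ, G x = 0 := by
    intro x
    have h1 := has_pointwise_sum_fourier_series_of_summable (f := g)
      (by rw [show fourierCoeff g = 0 from funext hcoef]; exact summable_zero) (x : AddCircle (1 : ℝ))
    simp only [hcoef, zero_smul] at h1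
    have h2 : g (x : AddCircle (1 : ℝ)) = 0 := h1.unique hasSum_zero
    exact h2
  have : G = fun _ => 0 := by
    refine AnalyticOnNhd.eq_of_frequently_eq (z₀ := 0) (fun x _ => hG.analyticAt x)
      (fun x _ => analyticAt_const) ?_
    have ht : Filter.Tendsto (fun x : ℝ => (x : ℂ)) (nhdsWithin 0 {0}ᶜ) (nhdsWithin 0 {0}ᶜ) := by
      refine tendsto_nhdsWithin_of_tendsto_nhds_of_eventually_within _ ?_ ?_
      · refine Filter.Tendsto.mono_left ?_ nhdsWithin_le_nhds
        have := continuous_ofReal.tendsto 0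
        simpa using this
      · filter_upwards [self_mem_nhdsWithin] with x hx
        simpa using hx
    exact ht.frequently (Filter.Eventually.of_forall hz).frequently
  rw [this]

theorem one_dim_zero {t : ℂ} {F : ℂ → ℂ} (hF : Differentiable ℂ F)
    (h1 : ∀ x, F (x + 1) = - F x)
    (h2 : ∀ x, F (x + t) = - cexp (-Real.pi * I * t - 2 * Real.pi * I * x) * F x)
    (h0 : ∫ x in (0 : ℝ)..1, cexp (-Real.pi * I * x) * F x = 0) : ∀ z, F z = 0 := by
  have hstep : ∀ n : ℤ, ∫ x in (0 : ℝ)..1, cexp (-Real.pi * I * (2 * n + 1) * x) * F x =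
      -cexp (-Real.pi * I * (2 * n + 2) * t) *
      ∫ x in (0 : ℝ)..1, cexp (-Real.pi * I * (2 * (n + 1 : ℤ) + 1) * x) * F x := by
    intro n
    rw [← integral_shift (H := fun x => cexp (-Real.pi * I * (2 * n + 1) * x) * F x)
      (by fun_prop) ?_ t, ← intervalIntegral.integral_const_mul]
    · refine intervalIntegral.integral_congr fun x _ => ?_
      simp only [h2]
      rw [← mul_assoc, ← mul_assoc, mul_neg, neg_mul (cexp _) (cexp _), ← Complex.exp_add,
        ← Complex.exp_add]
      congr 3
      push_cast
      ring
    · intro x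
      simp only [h1]
      rw [mul_neg, ← neg_mul]
      congr 1
      rw [exp_eq_neg_exp (u := -Real.pi * I * (2 * n + 1) * (x + 1))
        (v := -Real.pi * I * (2 * n + 1) * x) (-n - 1), neg_neg]
      push_cast
      ring
  have hall : ∀ n : ℤ, ∫ x in (0 : ℝ)..1, cexp (-Real.pi * I * (2 * n + 1) * x) * F x = 0 := by
    intro n
    induction n using Int.induction_on with
    | zero => simpa using h0
    | succ k ih =>
      have := hstep k
      rw [ih] at this
      simpa [Complex.exp_ne_zero] using this.symm
    | pred k ih =>
      have := hstep (-k - 1)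
      rw [sub_add_cancel, ih, mul_zero] at this
      exact this
  intro z
  have hz := fourier_zero_of (G := fun x => cexp (-Real.pi * I * x) * F x) (by fun_prop) ?_ ?_ z
  · simpa [Complex.exp_ne_zero] using hz
  · intro x
    simp only [h1]
    rw [mul_neg, ← neg_mul]
    congr 1
    rw [exp_eq_neg_exp (u := -Real.pi * I * (x + 1)) (v := -Real.pi * I * x) (-1), neg_neg]
    push_cast
    ring
  · intro n
    rw [← hall n]
    refine intervalIntegral.integral_congr fun x _ => ?_
    rw [← mul_assoc, ← Complex.exp_add]
    congr 2
    ring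

theorem one_dim {t : ℂ} (ht : 0 < t.im) {w : ℂ} (hw : th t w ≠ 0) {F : ℂ → ℂ}
    (hF : Differentiable ℂ F)
    (h1 : ∀ x, F (x + 1) = - F x)
    (h2 : ∀ x, F (x + t) = - cexp (-Real.pi * I * t - 2 * Real.pi * I * x) * F x) :
    ∃ κ : ℂ, ∀ z, F z = κ * th t z := by
  set c0 := ∫ x in (0 : ℝ)..1, cexp (-Real.pi * I * x) * th t x with hc0
  have hth := th_diff ht
  have hne : c0 ≠ 0 := fun h =>
    hw (one_dim_zero hth (th_add_one t) (th_add_t t) h w)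
  set c1 := ∫ x in (0 : ℝ)..1, cexp (-Real.pi * I * x) * F x with hc1
  refine ⟨c1 / c0, fun z => ?_⟩
  have := one_dim_zero (t := t) (F := fun x => F x - c1 / c0 * th t x) (by fun_prop) ?_ ?_ ?_ z
  · linear_combination this
  · intro x
    simp only [h1, th_add_one]
    ring
  · intro x
    simp only [h2, th_add_t]
    ring
  · have e : ∀ x : ℝ, cexp (-Real.pi * I * x) * (F x - c1 / c0 * th t x)
        = cexp (-Real.pi * I * x) * F x - c1 / c0 * (cexp (-Real.pi * I * x) * th t x) := by
      intro x; ring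
    simp only [e]
    have hFc := hF.continuous
    have htc := hth.continuous
    rw [intervalIntegral.integral_sub, intervalIntegral.integral_const_mul, ← hc0, ← hc1]
    · field_simp
      ring
    · apply Continuous.intervalIntegrable; fun_prop
    · apply Continuous.intervalIntegrable; fun_prop

/-- The theta functions entering the matrix entries. -/
noncomputable def ff (N : ℕ) (tau : ℂ) (k : ℤ) (x : ℂ) : ℂ :=
  thetaChar ((k : ℝ) / N + 1 / 2) (1 / 2) x ((N : ℂ) * tau)

noncomputable def ee (N : ℕ) (tau : ℂ) (k : ℤ) (x : ℂ) : ℂ :=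
  cexp (Real.pi * I * k ^ 2 * tau / N + 2 * Real.pi * I * (k / N) * (x + 1 / 2))

theorem ff_eq {N : ℕ} (hN : 1 ≤ N) (tau : ℂ) (k : ℤ) (x : ℂ) :
    ff N tau k x = ee N tau k x * th (N * tau) (x + k * tau) := by
  have hN0 : (N : ℂ) ≠ 0 := by exact_mod_cast (by omega : N ≠ 0)
  unfold ff ee
  rw [tc_eq, th_eq, ← mul_assoc (cexp _) (cexp _), ← Complex.exp_add]
  congr 2
  · push_cast
    field_simp
    ring
  · push_cast
    field_simp
    ring

theorem ee_ne (N : ℕ) (tau : ℂ) (k : ℤ) (x : ℂ) : ee N tau k x ≠ 0 := Complex.exp_ne_zero _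

theorem ff_add_mul {N : ℕ} (hN : 1 ≤ N) (tau : ℂ) (k m : ℤ) (x : ℂ) :
    ff N tau (k + N * m) x = ff N tau k x := by
  have hN0 : (N : ℝ) ≠ 0 := by exact_mod_cast (by omega : N ≠ 0)
  unfold ff
  rw [← tc_add_int ((k : ℝ) / N + 1 / 2) (1 / 2) x _ m]
  congr 1
  push_cast
  field_simp
  ring

theorem ff_emod {N : ℕ} (hN : 1 ≤ N) (tau : ℂ) (k : ℤ) (x : ℂ) :
    ff N tau (k % N) x = ff N tau k x := by
  rw [← ff_add_mul hN tau (k % N) (k / N), Int.emod_add_mul_ediv]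

theorem ff_diff {N : ℕ} (hN : 1 ≤ N) {tau : ℂ} (htau : 0 < tau.im) (k : ℤ) :
    Differentiable ℂ (ff N tau k) := by
  apply tc_diff
  have : (0 : ℝ) < N := by exact_mod_cast hN
  simpa using mul_pos this htau

theorem ff_add_one {N : ℕ} (hN : 1 ≤ N) (tau : ℂ) (k : ℤ) (x : ℂ) :
    ff N tau k (x + 1) = cexp (Real.pi * I + 2 * Real.pi * I * (k / N)) * ff N tau k x := by
  rw [ff_eq hN, ff_eq hN, show x + 1 + k * tau = x + k * tau + 1 by ring, th_add_one,
    mul_neg, ← neg_mul, ← mul_assoc]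
  congr 1
  unfold ee
  rw [← Complex.exp_add, eq_comm]
  refine exp_eq_neg_exp 0 ?_
  push_cast
  ring

theorem ff_add_tau {N : ℕ} (hN : 1 ≤ N) (tau : ℂ) (k : ℤ) (x : ℂ) :
    ff N tau k (x + tau) = cexp (-Real.pi * I * tau / N - 2 * Real.pi * I * (x + 1 / 2) / N)
      * ff N tau (k + 1) x := by
  have hN0 : (N : ℂ) ≠ 0 := by exact_mod_cast (by omega : N ≠ 0)
  rw [ff_eq hN, ff_eq hN, show x + tau + k * tau = x + ((k + 1 : ℤ) : ℂ) * tau by push_cast; ring,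
    ← mul_assoc]
  congr 1
  unfold ee
  rw [← Complex.exp_add]
  congr 1
  push_cast
  field_simp
  ring

noncomputable def PP (N : ℕ) (tau : ℂ) (x : ℂ) : ℂ := ∏ k ∈ Finset.range N, ff N tau k x

theorem PP_diff {N : ℕ} (hN : 1 ≤ N) {tau : ℂ} (htau : 0 < tau.im) :
    Differentiable ℂ (PP N tau) := by
  unfold PP
  exact Differentiable.fun_finsetProd fun k _ => ff_diff hN htau k

theorem sum_aux (N : ℕ) (n : ℕ) :
    ∑ k ∈ Finset.range n, ((Real.pi : ℂ) * I + 2 * Real.pi * I * (((k : ℤ) : ℂ) / N))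
      = Real.pi * I * n + Real.pi * I * n * (n - 1) / N := by
  induction n with
  | zero => simp
  | succ n ih =>
    rw [Finset.sum_range_succ, ih]
    push_cast
    ring

theorem PP_add_one {N : ℕ} (hN : 1 ≤ N) (tau x : ℂ) : PP N tau (x + 1) = - PP N tau x := by
  have hN0 : (N : ℂ) ≠ 0 := by exact_mod_cast (by omega : N ≠ 0)
  unfold PP
  simp only [ff_add_one hN]
  rw [Finset.prod_mul_distrib, ← Complex.exp_sum, sum_aux, ← neg_one_mul]
  congr 1
  rw [exp_eq_neg_exp (v := 0) (N - 1), Complex.exp_zero]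
  push_cast
  field_simp
  ring

theorem PP_add_tau {N : ℕ} (hN : 1 ≤ N) (tau x : ℂ) : PP N tau (x + tau) =
    - cexp (-Real.pi * I * tau - 2 * Real.pi * I * x) * PP N tau x := by
  have hN0 : (N : ℂ) ≠ 0 := by exact_mod_cast (by omega : N ≠ 0)
  unfold PP
  simp only [ff_add_tau hN]
  rw [Finset.prod_mul_distrib, Finset.prod_const, Finset.card_range, ← Complex.exp_nat_mul]
  congr 1
  · refine exp_eq_neg_exp (-1) ?_
    push_cast
    field_simp
    ring
  · have h1 := Finset.prod_range_succ (fun k : ℕ => ff N tau k x) N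
    have h2 := Finset.prod_range_succ' (fun k : ℕ => ff N tau k x) N
    obtain ⟨n, rfl⟩ : ∃ n, N = n + 1 := ⟨N - 1, by omega⟩
    rw [Finset.prod_range_succ, Finset.prod_range_succ' (fun k : ℕ => ff (n + 1) tau k x)]
    push_cast
    congr 1
    have := ff_add_mul hN tau 0 1 x
    push_cast at this
    rw [← this]
    congr 1
    ring

theorem ff_ne_of_PP {N : ℕ} (hN : 1 ≤ N) {tau x : ℂ} (h : PP N tau x ≠ 0) (k : ℤ) :
    ff N tau k x ≠ 0 := by
  rw [← ff_emod hN]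
  have h1 := Int.emod_nonneg k (by omega : (N : ℤ) ≠ 0)
  have h2 := Int.emod_lt_of_pos k (by omega : (0 : ℤ) < N)
  have h3 := Finset.prod_ne_zero_iff.1 h (k % N).toNat (Finset.mem_range.2 (by omega))
  rwa [Int.toNat_of_nonneg h1] at h3

theorem PP_ne_of_ff {N : ℕ} {tau x : ℂ} (h : ∀ k : ℤ, ff N tau k x ≠ 0) : PP N tau x ≠ 0 :=
  Finset.prod_ne_zero_iff.2 fun k _ => h k

theorem prod_filter_mul {N : ℕ} (hN : 1 ≤ N) (tau x : ℂ) (b : ℤ) :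
    (∏ k ∈ (Finset.range N).filter (fun k : ℕ => (k : ℤ) % (N : ℤ) ≠ b % (N : ℤ)),
        thetaChar ((k : ℝ) / N + 1 / 2) (1 / 2) x ((N : ℂ) * tau)) * ff N tau b x = PP N tau x := by
  have h1 := Int.emod_nonneg b (by omega : (N : ℤ) ≠ 0)
  have h2 := Int.emod_lt_of_pos b (by omega : (0 : ℤ) < N)
  have hset : (Finset.range N).filter (fun k : ℕ => (k : ℤ) % (N : ℤ) ≠ b % (N : ℤ))
      = (Finset.range N).erase (b % N).toNat := by
    ext k
    simp only [Finset.mem_filter, Finset.mem_range, Finset.mem_erase]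
    constructor
    · rintro ⟨hk, hne⟩
      refine ⟨fun h => hne ?_, hk⟩
      rw [Int.emod_eq_of_lt (by omega) (by omega)]
      omega
    · rintro ⟨hne, hk⟩
      refine ⟨hk, fun h => hne ?_⟩
      rw [Int.emod_eq_of_lt (by omega) (by omega)] at h
      omega
  rw [hset]
  unfold PP
  rw [← Finset.prod_erase_mul _ _ (Finset.mem_range.2 (by omega : (b % N).toNat < N))]
  congr 1
  · rw [← ff_emod hN, Int.toNat_of_nonneg h1]

noncomputable def CC (N : ℕ) (tau : ℂ) : ℂ := ∏ k ∈ Finset.Icc 1 (N - 1),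
        thetaChar ((k : ℝ) / N + 1 / 2) (1 / 2) 0 ((N : ℂ) * tau)

theorem Smat_eq {N : ℕ} (hN : 1 ≤ N) (x z tau : ℂ) (a b : ℤ) (h : ff N tau b x ≠ 0) :
    Smat N x z tau a b = ff N tau (b - a) (x + z) / ff N tau (-a) z * (PP N tau x / ff N tau b x)
      / CC N tau := by
  rw [← prod_filter_mul hN tau x b, mul_div_cancel_right₀ _ h]
  unfold Smat ff CC
  push_cast
  rfl

noncomputable def EE (N : ℕ) (tau x z : ℂ) (i j : ℤ) : ℂ :=
  -cexp (-2 * Real.pi * I * tau / N * (i ^ 2 + j ^ 2) - 2 * Real.pi * I / N * (i + j) * (z + x)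
    - 2 * Real.pi * I * i / N) * ff N tau (2 * i) (x + z) * PP N tau x * PP N tau (-x) / CC N tau ^ 2

theorem term_eq {N : ℕ} (hN : 1 ≤ N) (x z tau : ℂ) (i j k : ℤ)
    (hz : ∀ k, ff N tau k z ≠ 0) (hx : ∀ k, ff N tau k x ≠ 0) (hx' : ∀ k, ff N tau k (-x) ≠ 0) :
    Smat N x z tau (-i - k) (i - k) * Smat N (-x) z tau (-j - k) (k - j)
      = EE N tau x z i j * (th (N * tau) ((z + (k + i) * tau) + (-x + (k - i) * tau)) /
        (th (N * tau) (z + (k + i) * tau) * th (N * tau) (-x + (k - i) * tau)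
          * th (N * tau) (z + (k + j) * tau) * th (N * tau) (-x + (k - j) * tau))) := by
  have hN0 : (N : ℂ) ≠ 0 := by exact_mod_cast (by omega : N ≠ 0)
  rw [Smat_eq hN _ _ _ _ _ (hx _), Smat_eq hN _ _ _ _ _ (hx' _)]
  rw [show i - k - (-i - k) = 2 * i by ring, show k - j - (-j - k) = 2 * k by ring,
    show -(-i - k) = k + i by ring, show -(-j - k) = k + j by ring]
  have a1 := hz (k + i)
  have a2 := hz (k + j)
  have a3 := hx (i - k)
  have a4 := hx' (k - j)
  have hexp : ee N tau (2 * k) (-x + z) = cexp (-2 * Real.pi * I * tau / N * (i ^ 2 + j ^ 2)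
      - 2 * Real.pi * I / N * (i + j) * (z + x) - 2 * Real.pi * I * i / N) *
      (ee N tau (k + i) z * ee N tau (i - k) x * ee N tau (k + j) z * ee N tau (k - j) (-x)) := by
    unfold ee
    simp only [← Complex.exp_add]
    congr 1
    push_cast
    field_simp
    ring
  have hodd : th (N * tau) (x + ((i - k : ℤ) : ℂ) * tau) = - th (N * tau) (-x + (k - i) * tau) := by
    rw [← th_neg]; congr 1; push_cast; ring
  have b1 := ee_ne N tau (k + i) z
  have b2 := ee_ne N tau (k + j) z
  have b3 := ee_ne N tau (i - k) x
  have b4 := ee_ne N tau (k - j) (-x)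
  rw [ff_eq hN] at a1 a2 a3 a4
  unfold EE
  rw [ff_eq hN tau (2 * k), ff_eq hN tau (k + i), ff_eq hN tau (k + j), ff_eq hN tau (i - k),
    ff_eq hN tau (k - j), hexp]
  have c1 := right_ne_zero_of_mul a1
  have c2 := right_ne_zero_of_mul a2
  have c3 := right_ne_zero_of_mul a3
  have c4 := right_ne_zero_of_mul a4
  rw [hodd] at c3 ⊢
  rw [neg_ne_zero] at c3
  have hs : -x + z + ((2 * k : ℤ) : ℂ) * tau = z + (k + i) * tau + (-x + (k - i) * tau) := by
    push_cast; ring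
  rw [hs]
  push_cast at c1 c2 c3 c4 ⊢
  generalize cexp _ = q
  generalize ff N tau (2 * i) (x + z) = g
  by_cases hC : CC N tau = 0
  · simp [hC]
  field_simp

/-- second logarithmic derivative -/
noncomputable def MM (t x : ℂ) : ℂ :=
  (deriv (deriv (th t)) x * th t x - deriv (th t) x ^ 2) / th t x ^ 2

noncomputable def LL (t x : ℂ) : ℂ := deriv (th t) x / th t x

theorem LL_hasDeriv {t : ℂ} (ht : 0 < t.im) {x : ℂ} (hx : th t x ≠ 0) :
    HasDerivAt (LL t) (MM t x) x := by
  have hf := th_diff ht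
  have := (hf.deriv x).hasDerivAt.div (hf x).hasDerivAt hx
  unfold MM
  rw [pow_two (deriv (th t) x)]
  exact this

theorem th_deriv_shift {t : ℂ} (ht : 0 < t.im) (x : ℂ) : deriv (th t) (x + t) =
    - cexp (-Real.pi * I * t - 2 * Real.pi * I * x) * (deriv (th t) x - 2 * Real.pi * I * th t x) := by
  have hf := th_diff ht
  have h1 : HasDerivAt (fun x => th t (x + t)) (deriv (th t) (x + t)) x :=
    (hf (x + t)).hasDerivAt.comp_add_const x t
  have he : HasDerivAt (fun x => - cexp (-Real.pi * I * t - 2 * Real.pi * I * x))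
      (-(cexp (-Real.pi * I * t - 2 * Real.pi * I * x) * (-(2 * Real.pi * I)))) x := by
    have h : HasDerivAt (fun x : ℂ => (-Real.pi * I * t - 2 * Real.pi * I * x)) (-(2 * Real.pi * I)) x := by
      simpa using ((hasDerivAt_id x).const_mul (2 * Real.pi * I : ℂ)).const_sub (-Real.pi * I * t)
    exact h.cexp.neg
  have h2 := he.mul (hf x).hasDerivAt
  have h3 := h1.unique (h2.congr_of_eventuallyEq (Filter.Eventually.of_forall fun e => th_add_t t e))
  rw [h3]
  ring

theorem th_ne_shift {t x : ℂ} (hx : th t x ≠ 0) : th t (x + t) ≠ 0 := by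
  rw [th_add_t]
  exact mul_ne_zero (neg_ne_zero.2 (Complex.exp_ne_zero _)) hx

theorem LL_shift {t : ℂ} (ht : 0 < t.im) {x : ℂ} (hx : th t x ≠ 0) :
    LL t (x + t) = LL t x - 2 * Real.pi * I := by
  unfold LL
  rw [th_deriv_shift ht, th_add_t]
  have := Complex.exp_ne_zero (-Real.pi * I * t - 2 * Real.pi * I * x)
  generalize cexp _ = q at *
  field_simp

theorem MM_shift {t : ℂ} (ht : 0 < t.im) {x : ℂ} (hx : th t x ≠ 0) :
    MM t (x + t) = MM t x := by
  have h1 := (LL_hasDeriv ht (th_ne_shift hx)).comp_add_const x t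
  have h2 := (LL_hasDeriv ht hx).sub_const (2 * Real.pi * I)
  refine h1.unique (h2.congr_of_eventuallyEq ?_)
  filter_upwards [(th_diff ht).continuous.continuousAt.eventually_ne hx] with y hy
  exact LL_shift ht hy

theorem sum_shift_s7 {N : ℕ} (g : ℤ → ℂ) (c : ℂ) (hg : ∀ k, g (k + N) = g k + c) (m : ℤ) :
    ∑ k ∈ Finset.range N, g (k + m) = ∑ k ∈ Finset.range N, g k + m * c := by
  have step : ∀ m : ℤ, ∑ k ∈ Finset.range N, g (k + (m + 1)) = ∑ k ∈ Finset.range N, g (k + m) + c := by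
    intro m
    have h1 := Finset.sum_range_succ (fun k : ℕ => g (k + m)) N
    have h2 := Finset.sum_range_succ' (fun k : ℕ => g (k + m)) N
    have h3 : ∑ k ∈ Finset.range N, g (((k + 1 : ℕ) : ℤ) + m) = ∑ k ∈ Finset.range N, g (k + (m + 1)) :=
      Finset.sum_congr rfl fun k _ => by congr 1; push_cast; ring
    rw [h3] at h2
    have h4 := hg m
    rw [add_comm m] at h4
    rw [h4] at h1
    push_cast at h2
    rw [zero_add] at h2
    linear_combination h1 - h2
  induction m using Int.induction_on with
  | zero => simp
  | succ k ih => rw [step, ih]; push_cast; ring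
  | pred k ih =>
    have := step (-k - 1)
    rw [sub_add_cancel, ih] at this
    push_cast at this ⊢
    linear_combination -this

theorem LL_sum {N : ℕ} {tau : ℂ} (ht : 0 < (N * tau).im) {x : ℂ}
    (hx : ∀ k : ℤ, th (N * tau) (x + k * tau) ≠ 0) (m : ℤ) :
    ∑ k ∈ Finset.range N, LL (N * tau) (x + (k + m) * tau)
      = ∑ k ∈ Finset.range N, LL (N * tau) (x + k * tau) - m * (2 * Real.pi * I) := by
  have := sum_shift_s7 (N := N) (fun k => LL (N * tau) (x + k * tau)) (-(2 * Real.pi * I)) ?_ m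
  · push_cast at this
    rw [this]
    ring
  · intro k
    rw [← sub_eq_add_neg, ← LL_shift ht (hx k)]
    congr 1
    push_cast
    ring

theorem MM_sum {N : ℕ} {tau : ℂ} (ht : 0 < (N * tau).im) {x : ℂ}
    (hx : ∀ k : ℤ, th (N * tau) (x + k * tau) ≠ 0) (m : ℤ) :
    ∑ k ∈ Finset.range N, MM (N * tau) (x + (k + m) * tau)
      = ∑ k ∈ Finset.range N, MM (N * tau) (x + k * tau) := by
  have := sum_shift_s7 (N := N) (fun k => MM (N * tau) (x + k * tau)) 0 ?_ m
  · push_cast at this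
    rw [this]
    ring
  · intro k
    rw [add_zero, ← MM_shift ht (hx k)]
    congr 1
    push_cast
    ring

theorem ee_hasDeriv (N : ℕ) (tau : ℂ) (k : ℤ) (x : ℂ) :
    HasDerivAt (ee N tau k) (ee N tau k x * (2 * Real.pi * I * (k / N))) x := by
  have h : HasDerivAt (fun x : ℂ => Real.pi * I * k ^ 2 * tau / N + 2 * Real.pi * I * (k / N) * (x + 1 / 2))
      (2 * Real.pi * I * (k / N)) x := by
    have h0 := (((hasDerivAt_id x).add_const (1 / 2)).const_mul
      (2 * Real.pi * I * (k / N) : ℂ)).const_add (Real.pi * I * k ^ 2 * tau / N)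
    rw [mul_one] at h0
    exact h0
  exact h.cexp

theorem logDeriv_ff {N : ℕ} (hN : 1 ≤ N) {tau : ℂ} (ht : 0 < (N * tau).im) (k : ℤ) (x : ℂ)
    (hx : ff N tau k x ≠ 0) :
    logDeriv (ff N tau k) x = 2 * Real.pi * I * (k / N) + LL (N * tau) (x + k * tau) := by
  have hf := th_diff ht
  have h1 := (ee_hasDeriv N tau k x).mul ((hf (x + k * tau)).hasDerivAt.comp_add_const x (k * tau))
  have h2 : HasDerivAt (ff N tau k) _ x :=
    h1.congr_of_eventuallyEq (Filter.Eventually.of_forall fun e => ff_eq hN tau k e)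
  rw [logDeriv_apply, h2.deriv]
  rw [ff_eq hN] at hx ⊢
  unfold LL
  have a1 := left_ne_zero_of_mul hx
  have a2 := right_ne_zero_of_mul hx
  field_simp

theorem MM_tau {N : ℕ} (hN : 1 ≤ N) {tau : ℂ} (htau : 0 < tau.im) (ht : 0 < (N * tau).im) {κ : ℂ}
    (hκ : κ ≠ 0) (hPP : ∀ z, PP N tau z = κ * th tau z) {x : ℂ} (hx : PP N tau x ≠ 0) :
    ∑ k ∈ Finset.range N, MM (N * tau) (x + k * tau) = MM tau x := by
  have hthx : th tau x ≠ 0 := by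
    rw [hPP] at hx; exact right_ne_zero_of_mul hx
  have h1 := LL_hasDeriv htau hthx
  have h2 : HasDerivAt (fun y => ∑ k ∈ Finset.range N,
      (2 * Real.pi * I * (((k : ℤ) : ℂ) / N) + LL (N * tau) (y + ((k : ℤ) : ℂ) * tau)))
      (∑ k ∈ Finset.range N, MM (N * tau) (x + ((k : ℤ) : ℂ) * tau)) x := by
    refine HasDerivAt.fun_sum fun k _ => ?_
    have h3 := ff_ne_of_PP hN hx k
    rw [ff_eq hN] at h3
    exact ((LL_hasDeriv ht (right_ne_zero_of_mul h3)).comp_add_const x _).const_add _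
  have h4 := h1.unique (h2.congr_of_eventuallyEq ?_)
  · rw [h4]; simp
  · filter_upwards [(PP_diff hN htau).continuous.continuousAt.eventually_ne hx] with y hy
    have h5 : logDeriv (PP N tau) y = LL tau y := by
      rw [show PP N tau = fun z => κ * th tau z from funext hPP, logDeriv_const_mul _ _ hκ]
      rfl
    rw [← h5]
    have h6 : PP N tau = fun y => ∏ k ∈ Finset.range N, ff N tau k y := rfl
    have h7 := logDeriv_prod (s := Finset.range N) (f := fun k : ℕ => ff N tau (k : ℤ)) (x := y)
      (fun k _ => ff_ne_of_PP hN hy k) (fun k _ => ff_diff hN htau k y)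
    rw [h6]
    refine h7.trans ?_
    exact Finset.sum_congr rfl fun k _ => logDeriv_ff hN ht k y (ff_ne_of_PP hN hy k)

theorem PP_deriv_zero {N : ℕ} (hN : 1 ≤ N) {tau : ℂ} (htau : 0 < tau.im) (ht : 0 < (N * tau).im) {κ : ℂ}
    (hPP : ∀ z, PP N tau z = κ * th tau z) :
    κ * deriv (th tau) 0 = deriv (th (N * tau)) 0 * CC N tau := by
  have h1 : HasDerivAt (PP N tau) (κ * deriv (th tau) 0) 0 :=
    (((th_diff htau) 0).hasDerivAt.const_mul κ).congr_of_eventuallyEq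
      (Filter.Eventually.of_forall hPP)
  have hset : Finset.range N = insert 0 (Finset.Icc 1 (N - 1)) := by
    ext k
    simp only [Finset.mem_range, Finset.mem_insert, Finset.mem_Icc]
    omega
  have h0 : ∀ x, ff N tau 0 x = th (N * tau) x := by
    intro x; simp [ff, th]
  have hP : ∀ x, PP N tau x = th (N * tau) x * ∏ k ∈ Finset.Icc 1 (N - 1), ff N tau k x := by
    intro x
    unfold PP
    rw [hset, Finset.prod_insert (by simp), ← h0]
    simp
  have hd : Differentiable ℂ (fun x => ∏ k ∈ Finset.Icc 1 (N - 1), ff N tau k x) :=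
    Differentiable.fun_finsetProd fun k _ => ff_diff hN htau k
  have h2 := ((th_diff ht) 0).hasDerivAt.mul (hd 0).hasDerivAt
  have h3 := h1.unique (h2.congr_of_eventuallyEq (Filter.Eventually.of_forall hP))
  rw [h3, th_zero]
  unfold CC ff
  simp

theorem off_alg {s W D S a b a' b' da db da' db' : ℂ} (ha : a ≠ 0) (hb : b ≠ 0) (ha' : a' ≠ 0)
    (hb' : b' ≠ 0)
    (h : s * S * W * D = (da * b + a * db) * a' * b' - (da' * b' + a' * db') * a * b) :
    s * W * D * (S / (a * b * a' * b')) = da / a - da' / a' + db / b - db' / b' := by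
  field_simp
  linear_combination h

theorem diag_alg {s W S a b da db : ℂ} (ha : a ≠ 0) (hb : b ≠ 0)
    (h : s ^ 2 * S * W = b ^ 2 * da - a ^ 2 * db) :
    s ^ 2 * W * (S / (a * b * a * b)) = da / a ^ 2 - db / b ^ 2 := by
  field_simp
  linear_combination h

theorem offdiag {N : ℕ} {tau : ℂ} (ht : 0 < (N * tau).im) {x z : ℂ} (i j : ℤ)
    (hz : ∀ k : ℤ, th (N * tau) (z + k * tau) ≠ 0) (hx : ∀ k : ℤ, th (N * tau) (-x + k * tau) ≠ 0)
    (h1 : th (N * tau) (z + x + (i + j) * tau) ≠ 0) (h2 : th (N * tau) (-((j - i) * tau)) ≠ 0) :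
    ∑ k ∈ Finset.range N, (th (N * tau) ((z + (k + i) * tau) + (-x + (k - i) * tau)) /
        (th (N * tau) (z + (k + i) * tau) * th (N * tau) (-x + (k - i) * tau)
          * th (N * tau) (z + (k + j) * tau) * th (N * tau) (-x + (k - j) * tau))) = 0 := by
  have hs := th_deriv_ne ht h2
  have hc := mul_ne_zero (mul_ne_zero hs h1) h2
  refine (mul_eq_zero.1 ?_).resolve_left hc
  rw [Finset.mul_sum]
  have hterm : ∀ k ∈ Finset.range N, deriv (th (N * tau)) 0 * th (N * tau) (z + x + (i + j) * tau)
      * th (N * tau) (-((j - i) * tau)) *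
      (th (N * tau) ((z + (k + i) * tau) + (-x + (k - i) * tau)) /
        (th (N * tau) (z + (k + i) * tau) * th (N * tau) (-x + (k - i) * tau)
          * th (N * tau) (z + (k + j) * tau) * th (N * tau) (-x + (k - j) * tau)))
      = LL (N * tau) (z + (k + i) * tau) - LL (N * tau) (z + (k + j) * tau)
        + LL (N * tau) (-x + (k + (-i : ℤ)) * tau) - LL (N * tau) (-x + (k + (-j : ℤ)) * tau) := by
    intro k _
    have hK := th_K ht (z + (k + i) * tau) (-x + (k - i) * tau) ((j - i) * tau)
    rw [show z + (k + i) * tau - (-x + (k - i) * tau) + (j - i) * tau = z + x + (i + j) * tau by ring,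
      show z + (k + i) * tau + (j - i) * tau = z + (k + j) * tau by ring,
      show -x + (k - i) * tau - (j - i) * tau = -x + (k - j) * tau by ring] at hK
    have b1 := hz (k + i)
    have b2 := hz (k + j)
    have b3 := hx (k - i)
    have b4 := hx (k - j)
    push_cast at b1 b2 b3 b4 ⊢
    rw [← sub_eq_add_neg, ← sub_eq_add_neg]
    exact off_alg b1 b3 b2 b4 hK
  rw [Finset.sum_congr rfl hterm]
  simp only [Finset.sum_add_distrib, Finset.sum_sub_distrib]
  rw [LL_sum ht hz, LL_sum ht hz, LL_sum ht hx, LL_sum ht hx]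
  push_cast
  ring

theorem diag {N : ℕ} (hN : 1 ≤ N) {tau : ℂ} (htau : 0 < tau.im) (ht : 0 < (N * tau).im) {x z : ℂ} (i : ℤ)
    (hz : PP N tau z ≠ 0) (hx : PP N tau (-x) ≠ 0) {κ : ℂ}
    (hκ : κ ≠ 0) (hPP : ∀ z, PP N tau z = κ * th tau z) :
    deriv (th (N * tau)) 0 ^ 2 * th (N * tau) (z + x + 2 * i * tau) *
    ∑ k ∈ Finset.range N, (th (N * tau) ((z + (k + i) * tau) + (-x + (k - i) * tau)) /
        (th (N * tau) (z + (k + i) * tau) * th (N * tau) (-x + (k - i) * tau)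
          * th (N * tau) (z + (k + i) * tau) * th (N * tau) (-x + (k - i) * tau)))
    = deriv (th tau) 0 ^ 2 * th tau (z - x) * th tau (z + x) / (th tau z ^ 2 * th tau (-x) ^ 2) := by
  have hz' : ∀ k : ℤ, th (N * tau) (z + k * tau) ≠ 0 := fun k => by
    have := ff_ne_of_PP hN hz k
    rw [ff_eq hN] at this
    exact right_ne_zero_of_mul this
  have hx' : ∀ k : ℤ, th (N * tau) (-x + k * tau) ≠ 0 := fun k => by
    have := ff_ne_of_PP hN hx k
    rw [ff_eq hN] at this
    exact right_ne_zero_of_mul this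
  rw [Finset.mul_sum]
  have hterm : ∀ k ∈ Finset.range N, deriv (th (N * tau)) 0 ^ 2 * th (N * tau) (z + x + 2 * i * tau) *
      (th (N * tau) ((z + (k + i) * tau) + (-x + (k - i) * tau)) /
        (th (N * tau) (z + (k + i) * tau) * th (N * tau) (-x + (k - i) * tau)
          * th (N * tau) (z + (k + i) * tau) * th (N * tau) (-x + (k - i) * tau)))
      = MM (N * tau) (z + (k + i) * tau) - MM (N * tau) (-x + (k + (-i : ℤ)) * tau) := by
    intro k _
    have hK := th_K2 ht (z + (k + i) * tau) (-x + (k - i) * tau)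
    rw [show z + (k + i) * tau - (-x + (k - i) * tau) = z + x + 2 * i * tau by ring] at hK
    have b1 := hz' (k + i)
    have b3 := hx' (k - i)
    push_cast at b1 b3 ⊢
    rw [← sub_eq_add_neg]
    exact diag_alg b1 b3 hK
  rw [Finset.sum_congr rfl hterm, Finset.sum_sub_distrib, MM_sum ht hz', MM_sum ht hx',
    MM_tau hN htau ht hκ hPP hz, MM_tau hN htau ht hκ hPP hx]
  have hK := th_K2 htau z (-x)
  have c1 : th tau z ≠ 0 := by rw [hPP] at hz; exact right_ne_zero_of_mul hz
  have c2 : th tau (-x) ≠ 0 := by rw [hPP] at hx; exact right_ne_zero_of_mul hx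
  rw [sub_neg_eq_add, ← sub_eq_add_neg] at hK
  rw [hK]
  unfold MM
  field_simp

theorem Smat_cont {N : ℕ} (hN : 1 ≤ N) {tau : ℂ} (htau : 0 < tau.im) (z : ℂ) (a b : ℤ) :
    Continuous (fun x => Smat N x z tau a b) := by
  have ht : 0 < (N * tau).im := by
    have : (0 : ℝ) < N := by exact_mod_cast hN
    simpa using mul_pos this htau
  have hc : ∀ g : ℝ, Continuous (fun x => thetaChar g (1 / 2) x (N * tau)) :=
    fun g => (tc_diff g (1 / 2) ht).continuous
  unfold Smat
  refine Continuous.div_const (Continuous.mul (Continuous.div_const ?_ _) ?_) _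
  · exact (hc _).comp (continuous_add_const z)
  · exact continuous_finsetProd _ fun k _ => hc _

theorem ev_ne {f : ℂ → ℂ} (hf : Differentiable ℂ f) {w : ℂ} (hw : f w ≠ 0) (x : ℂ) :
    ∀ᶠ y in nhdsWithin x {x}ᶜ, f y ≠ 0 := by
  rcases (hf.analyticAt x).eventually_eq_zero_or_eventually_ne_zero with h | h
  · exact absurd (congrFun (entire_eq_of_eventually hf (differentiable_const 0) h) w) hw
  · exact h

theorem generic {N : ℕ} (hN : 1 ≤ N) {tau : ℂ} (htau : 0 < tau.im) (ht : 0 < (N * tau).im)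
    {x z : ℂ} (hz : PP N tau z ≠ 0) (hx : PP N tau x ≠ 0) (hC : CC N tau ≠ 0)
    {κ : ℂ} (hκ : κ ≠ 0) (hPP : ∀ z, PP N tau z = κ * th tau z)
    (i j : ℕ) (hi : i < N) (hj : j < N) (hg : ff N tau (i + j) (x + z) ≠ 0) :
    ∑ k ∈ Finset.range N,
        Smat N x z tau (-(i : ℤ) - (k : ℤ)) ((i : ℤ) - (k : ℤ))
          * Smat N (-x) z tau (-(j : ℤ) - (k : ℤ)) ((k : ℤ) - (j : ℤ))
      = th tau (x + z) * th tau (-x + z) / th tau z ^ 2 * (if i = j then 1 else 0) := by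
  have hN0 : (N : ℂ) ≠ 0 := by exact_mod_cast (by omega : N ≠ 0)
  have hx' : PP N tau (-x) ≠ 0 := by
    rw [hPP] at hx ⊢
    rw [th_neg, mul_neg]
    exact neg_ne_zero.2 hx
  rw [Finset.sum_congr rfl (fun (k : ℕ) _ => term_eq hN x z tau i j (k : ℤ) (ff_ne_of_PP hN hz) (ff_ne_of_PP hN hx)
    (ff_ne_of_PP hN hx')), ← Finset.mul_sum]
  push_cast
  have hth : ∀ (k : ℤ) (y : ℂ), ff N tau k y ≠ 0 → th (N * tau) (y + k * tau) ≠ 0 := by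
    intro k y h
    rw [ff_eq hN] at h
    exact right_ne_zero_of_mul h
  by_cases hij : i = j
  · subst hij
    rw [if_pos rfl, mul_one]
    have hd := diag hN htau ht (i : ℤ) hz hx' hκ hPP
    have hs0 := th_deriv_ne ht (hth 0 z (ff_ne_of_PP hN hz 0))
    have h0 := PP_deriv_zero hN htau ht hPP
    have hg' := hth _ _ hg
    rw [show x + z + ((i + i : ℤ) : ℂ) * tau = z + x + 2 * i * tau by push_cast; ring] at hg'
    push_cast at hd
    have hE : EE N tau x z i i = - th (N * tau) (z + x + 2 * i * tau) * PP N tau x * PP N tau (-x)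
        / CC N tau ^ 2 := by
      unfold EE
      rw [ff_eq hN, ← mul_assoc, neg_mul (cexp _) (ee _ _ _ _)]
      have : cexp (-2 * Real.pi * I * tau / N * (((i : ℤ) : ℂ) ^ 2 + ((i : ℤ) : ℂ) ^ 2)
          - 2 * Real.pi * I / N * (((i : ℤ) : ℂ) + ((i : ℤ) : ℂ)) * (z + x)
          - 2 * Real.pi * I * ((i : ℤ) : ℂ) / N) * ee N tau (2 * i) (x + z) = 1 := by
        unfold ee
        rw [← Complex.exp_add]
        refine (congrArg cexp ?_).trans Complex.exp_zero
        push_cast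
        field_simp
        ring
      rw [this, show x + z + ((2 * (i : ℤ) : ℤ) : ℂ) * tau = z + x + 2 * i * tau by push_cast; ring]
      ring
    have c1 : th tau z ≠ 0 := by rw [hPP] at hz; exact right_ne_zero_of_mul hz
    have c2 : th tau (-x) ≠ 0 := by rw [hPP] at hx'; exact right_ne_zero_of_mul hx'
    have c3 : th tau x = - th tau (-x) := by rw [th_neg, neg_neg]
    rw [hE, hPP, hPP, c3, show x + z = z + x by ring, show -x + z = z - x by ring]
    generalize Finset.sum (Finset.range N) (M := ℂ) _ = S at hd ⊢
    rw [eq_div_iff (mul_ne_zero (pow_ne_zero 2 c1) (pow_ne_zero 2 c2))] at hd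
    rw [div_mul_eq_mul_div, div_eq_div_iff (pow_ne_zero 2 hC) (pow_ne_zero 2 c1)]
    have hq : deriv (th (N * tau)) 0 ^ 2 ≠ 0 := pow_ne_zero 2 hs0
    apply mul_left_cancel₀ hq
    linear_combination κ ^ 2 * hd + th tau (z - x) * th tau (z + x) * (κ * deriv (th tau) 0
      + deriv (th (N * tau)) 0 * CC N tau) * h0
  · rw [if_neg hij, mul_zero]
    have hs := offdiag ht (x := x) (z := z) (i : ℤ) (j : ℤ)
      (fun k => hth k z (ff_ne_of_PP hN hz k)) (fun k => hth k (-x) (ff_ne_of_PP hN hx' k)) ?_ ?_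
    · push_cast at hs
      rw [hs, mul_zero]
    · have := hth _ _ hg
      push_cast at this ⊢
      rwa [add_comm z x]
    · rw [th_neg]
      refine neg_ne_zero.2 ?_
      have h1 : ff N tau (j - i) 0 ≠ 0 := by
        rw [← ff_emod hN]
        have h1 := Int.emod_nonneg (j - i : ℤ) (by omega : (N : ℤ) ≠ 0)
        have h2 := Int.emod_lt_of_pos (j - i : ℤ) (by omega : (0 : ℤ) < N)
        have h4 : (j - i : ℤ) % N ≠ 0 := by
          intro h
          obtain ⟨c, hc⟩ := Int.dvd_of_emod_eq_zero h
          have : c = 0 := by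
            by_contra hc0
            rcases lt_or_gt_of_ne hc0 with h | h <;> nlinarith
          subst this
          omega
        have h3 := Finset.prod_ne_zero_iff.1 hC ((j - i : ℤ) % N).toNat
          (Finset.mem_Icc.2 (by omega))
        unfold ff
        have h5 : (((((j - i : ℤ) % N).toNat : ℕ) : ℤ) : ℝ) = (((j - i : ℤ) % N : ℤ) : ℝ) := by
          rw [Int.toNat_of_nonneg h1]
        rw [← h5]
        rw [Int.cast_natCast]
        exact h3
      have h2 := hth _ _ h1
      push_cast at h2 ⊢
      rwa [zero_add] at h2

/-- The unitarity identity for the elliptic R-matrix entries: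
`∑_{k∈ℤ_N} S^{−i−k,i−k}(ξ,ζ,τ) S^{−j−k,k−j}(−ξ,ζ,τ)
  = (ϑ[1/2,1/2](ξ+ζ,τ) ϑ[1/2,1/2](−ξ+ζ,τ)/ϑ[1/2,1/2](ζ,τ)²) δ_{ij}`. -/
theorem stmt7 (N : ℕ) (hN : 1 ≤ N) (tau : ℂ) (htau : 0 < tau.im) (xi zeta : ℂ)
    (hden1 : ∀ a : ℤ, thetaChar (-((a : ℤ) : ℝ) / N + 1 / 2) (1 / 2) zeta ((N : ℂ) * tau) ≠ 0)
    (hden2 : ∏ k ∈ Finset.Icc 1 (N - 1),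
      thetaChar ((k : ℝ) / N + 1 / 2) (1 / 2) 0 ((N : ℂ) * tau) ≠ 0)
    (hden3 : thetaChar (1 / 2) (1 / 2) zeta tau ≠ 0)
    (i j : ℕ) (hi : i < N) (hj : j < N) :
    ∑ k ∈ Finset.range N,
        Smat N xi zeta tau (-(i : ℤ) - (k : ℤ)) ((i : ℤ) - (k : ℤ))
          * Smat N (-xi) zeta tau (-(j : ℤ) - (k : ℤ)) ((k : ℤ) - (j : ℤ))
      = thetaChar (1 / 2) (1 / 2) (xi + zeta) tau * thetaChar (1 / 2) (1 / 2) (-xi + zeta) tau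
          / thetaChar (1 / 2) (1 / 2) zeta tau ^ 2
        * (if i = j then 1 else 0) := by
  have ht : 0 < (N * tau).im := by
    have : (0 : ℝ) < N := by exact_mod_cast hN
    simpa using mul_pos this htau
  have hzk : ∀ k : ℤ, ff N tau k zeta ≠ 0 := by
    intro k
    have := hden1 (-k)
    unfold ff
    push_cast at this
    rwa [neg_neg] at this
  have hz : PP N tau zeta ≠ 0 := PP_ne_of_ff hzk
  obtain ⟨κ, hPP⟩ := one_dim htau (w := zeta) hden3 (PP_diff hN htau) (PP_add_one hN tau)
    (PP_add_tau hN tau)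
  have hκ : κ ≠ 0 := by
    rw [hPP] at hz
    exact left_ne_zero_of_mul hz
  have hev : ∀ᶠ x in nhdsWithin xi {xi}ᶜ, ∑ k ∈ Finset.range N,
        Smat N x zeta tau (-(i : ℤ) - (k : ℤ)) ((i : ℤ) - (k : ℤ))
          * Smat N (-x) zeta tau (-(j : ℤ) - (k : ℤ)) ((k : ℤ) - (j : ℤ))
      = th tau (x + zeta) * th tau (-x + zeta) / th tau zeta ^ 2 * (if i = j then 1 else 0) := by
    have hd : Differentiable ℂ (fun x => ff N tau (i + j) (x + zeta)) := by
      have := ff_diff hN htau (i + j)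
      fun_prop
    filter_upwards [ev_ne (PP_diff hN htau) hz xi,
      ev_ne hd (w := 0) (by simpa using hzk (i + j)) xi] with x h1 h2
    exact generic hN htau ht hz h1 hden2 hκ hPP i j hi hj h2
  have hthc := (th_diff htau).continuous
  have hL : Continuous (fun x => ∑ k ∈ Finset.range N,
        Smat N x zeta tau (-(i : ℤ) - (k : ℤ)) ((i : ℤ) - (k : ℤ))
          * Smat N (-x) zeta tau (-(j : ℤ) - (k : ℤ)) ((k : ℤ) - (j : ℤ))) :=
    continuous_finsetSum _ fun k _ => (Smat_cont hN htau zeta _ _).mul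
      ((Smat_cont hN htau zeta _ _).comp continuous_neg)
  have hR : Continuous (fun x => th tau (x + zeta) * th tau (-x + zeta) / th tau zeta ^ 2
      * (if i = j then 1 else 0)) := by
    refine Continuous.mul (Continuous.div_const ?_ _) continuous_const
    fun_prop
  have l1 := (hL.tendsto xi).mono_left (nhdsWithin_le_nhds (s := {xi}ᶜ))
  have l2 := (hR.tendsto xi).mono_left (nhdsWithin_le_nhds (s := {xi}ᶜ))
  exact tendsto_nhds_unique (l1.congr' hev) l2
end
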